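/- Let C > 103/4 and suppose n > 4096, n > C/3 + 10/3 and n > (C/3 − 13/12)·log n. Let (X_t) be the Gibbs sampler on Δ_G started from an arbitrary deterministic point X_0 = x ∈ Δ_G. Then for every integer T > (8C/γ̂)·log n, ‖L(X_T) − U_G‖_TV ≤ 7·n^{4.5 − C/6}. -/

import Mathlib

open MeasureTheory

noncomputable section

/-- Uniform probability measure on a finset. -/
def unifOn {α : Type*} [MeasurableSpace α] (s : Finset α) : Measure α :=
  (s.card : ENNReal)⁻¹ • ∑ a ∈ s, Measure.dirac a

/-- Total variation distance between two measures. -/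
def tvDist {α : Type*} [MeasurableSpace α] (μ ν : Measure α) : ℝ :=
  ⨆ A : {A : Set α // MeasurableSet A}, ((μ A).toReal - (ν A).toReal)

variable (G : Type*) [Group G] [Fintype G] [DecidableEq G] [MeasurableSpace G]
  [DiscreteMeasurableSpace G]

/-- The simplex of probability vectors indexed by `G`. -/
def simplexG : Set (G → ℝ) := {x | (∀ g, 0 ≤ x g) ∧ ∑ g, x g = 1}

/-- The uniform (normalized `(n-1)`-dimensional Hausdorff) measure on the simplex. -/
def UG : Measure (G → ℝ) :=
  (μH[(Fintype.card G : ℝ) - 1] (simplexG G))⁻¹ •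
    (μH[(Fintype.card G : ℝ) - 1]).restrict (simplexG G)

/-- One step of the Gibbs sampler on the simplex from update datum `(g, r, λ)`. -/
def gibbsStepG (x : G → ℝ) (u : G × G × ℝ) : G → ℝ := fun h =>
  if h = u.1 then u.2.2 * (x u.1 + x (u.1 * u.2.1))
  else if h = u.1 * u.2.1 then (1 - u.2.2) * (x u.1 + x (u.1 * u.2.1))
  else x h

/-- Law of the random update datum: `g` uniform on `G`, `r` uniform on `R`,
`λ` uniform on `[0,1]`. -/
def driveG (R : Finset G) : Measure (G × G × ℝ) :=
  (unifOn (Finset.univ : Finset G)).prod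
    ((unifOn R).prod ((volume : Measure ℝ).restrict (Set.Icc 0 1)))

/-- Law of the Gibbs sampler after `T` steps started at `x`. -/
def lawG (R : Finset G) (x : G → ℝ) (T : ℕ) : Measure (G → ℝ) :=
  Measure.map (fun ω : Fin T → G × G × ℝ => (List.ofFn ω).foldl (gibbsStepG G) x)
    (Measure.pi fun _ => driveG G R)

/-- The transition matrix of the slowed simple random walk on `G`. -/
def KhatM (R : Finset G) : G → G → ℝ := fun z w =>
  if z = w then 1 - 2 / (Fintype.card G : ℝ)
  else if z⁻¹ * w ∈ R then 2 / ((Fintype.card G : ℝ) * R.card) else 0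

/-- The spectral gap `γ̂ = 1 - λ̂₂` of `K̂`, with the second-largest eigenvalue
expressed by the variational (Courant–Fischer) characterization. -/
def gapHat (R : Finset G) : ℝ :=
  1 - sSup {lam : ℝ | ∃ v : G → ℝ, ∑ g, v g = 0 ∧ ∑ g, (v g) ^ 2 = 1 ∧
    lam = ∑ g, ∑ h, v g * KhatM G R g h * v h}

/-!
Run the chain from `x` together with a stationary copy and split the time into two phases.

In the first phase both copies use the same edges and proportions. Averaging the square of their
difference over the proportions leaves a quadratic form which, averaged over the translations of
the group, only sees the autocorrelation of the difference; this turns the expected squared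
distance into a walk on the differences of two vertices, and the spectral gap makes it contract.

In the second phase the edges are drawn first. Reading them backwards, the vertices are merged into
components; each edge joining two components lets the two copies choose proportions, with nearly
the same law, so as to equalise the masses of these components. If the edges connect the whole
group the copies agree at the end. Averaging along the edges, another contraction governed by the
gap, shows that connection is likely, and the choice of proportions fails only where the stationary
copy has very little mass, which the explicit uniform law on the simplex makes unlikely.
-/

open scoped ENNReal BigOperators

section Redistribution

variable {α : Type*} [DecidableEq α]

/-- The total mass at `a` and `b` is split anew: `v` at `a`, the remainder at `b`. -/
def redistribute (a b : α) (v : ℝ) (x : α → ℝ) : α → ℝ :=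
  Function.update (Function.update x b (x a + x b - v)) a v

/-- The update of the Gibbs sampler along the edge `(a, b)`: a proportion `l` of the total mass at
`a` and `b` goes to `a`. -/
def resample (a b : α) (l : ℝ) (x : α → ℝ) : α → ℝ :=
  redistribute a b (l * (x a + x b)) x

@[simp]
lemma redistribute_left (a b : α) (v : ℝ) (x : α → ℝ) : redistribute a b v x a = v := by
  simp [redistribute]

lemma redistribute_right {a b : α} (hab : a ≠ b) (v : ℝ) (x : α → ℝ) :
    redistribute a b v x b = x a + x b - v := by
  simp [redistribute, hab.symm]

lemma redistribute_of_ne {a b g : α} (ha : g ≠ a) (hb : g ≠ b) (v : ℝ) (x : α → ℝ) :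
    redistribute a b v x g = x g := by
  simp [redistribute, ha, hb]

lemma redistribute_sub {a b : α} (hab : a ≠ b) (v w : ℝ) (x y : α → ℝ) :
    redistribute a b v x - redistribute a b w y = redistribute a b (v - w) (x - y) := by
  funext g
  rcases eq_or_ne g a with rfl | ha
  · simp
  rcases eq_or_ne g b with rfl | hb
  · simp only [Pi.sub_apply, redistribute_right hab]
    ring
  · simp [redistribute_of_ne ha hb]

lemma resample_sub {a b : α} (hab : a ≠ b) (l : ℝ) (x y : α → ℝ) :
    resample a b l x - resample a b l y = resample a b l (x - y) := by
  rw [resample, resample, redistribute_sub hab, resample, Pi.sub_apply, Pi.sub_apply]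
  congr 1
  ring

lemma measurable_redistribute (a b : α) :
    Measurable fun p : (α → ℝ) × ℝ => redistribute a b p.2 p.1 := by
  refine measurable_pi_iff.2 fun g => ?_
  simp only [redistribute, Function.update_apply]
  split_ifs <;> fun_prop

lemma measurable_resample (a b : α) : Measurable fun p : (α → ℝ) × ℝ => resample a b p.2 p.1 :=
  (measurable_redistribute a b).comp (f := fun p : (α → ℝ) × ℝ => (p.1, p.2 * (p.1 a + p.1 b)))
    (by fun_prop)

lemma sum_comp_update {β M : Type*} [AddCommGroup M] (S : Finset α) (F : β → M) (a : α) (v : β)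
    (x : α → β) :
    ∑ g ∈ S, F (Function.update x a v g)
      = ∑ g ∈ S, F (x g) + if a ∈ S then F v - F (x a) else 0 := by
  have hcomp : ∀ g, F (Function.update x a v g) = Function.update (F ∘ x) a (F v) g := fun g =>
    congrFun (Function.comp_update F x a v) g
  simp only [hcomp]
  split_ifs with ha
  · rw [Finset.sum_update_of_mem ha, ← Finset.sum_sdiff (Finset.singleton_subset_iff.2 ha)]
    simp only [Function.comp_apply, Finset.sum_singleton]
    abel
  · rw [Finset.sum_update_of_notMem ha, add_zero]
    rfl

lemma sum_comp_redistribute {M : Type*} [AddCommGroup M] {a b : α} (hab : a ≠ b) (S : Finset α)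
    (F : ℝ → M) (v : ℝ) (x : α → ℝ) :
    ∑ g ∈ S, F (redistribute a b v x g)
      = ∑ g ∈ S, F (x g) + (if a ∈ S then F v - F (x a) else 0)
        + if b ∈ S then F (x a + x b - v) - F (x b) else 0 := by
  rw [redistribute, sum_comp_update, sum_comp_update, Function.update_of_ne hab]
  abel

lemma sum_resample {a b : α} (hab : a ≠ b) {S : Finset α} (hS : a ∈ S ↔ b ∈ S) (l : ℝ)
    (x : α → ℝ) : ∑ g ∈ S, resample a b l x g = ∑ g ∈ S, x g := by
  have hsum := sum_comp_redistribute hab S id (l * (x a + x b)) x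
  simp only [id_eq, ← hS] at hsum
  rw [resample, hsum]
  split_ifs <;> ring

end Redistribution

section UniformMeasure

/-- Lebesgue measure on the unit interval, the law of the proportion `λ`. -/
abbrev uniform01 : Measure ℝ := (volume : Measure ℝ).restrict (Set.Icc 0 1)

instance isProbabilityMeasure_uniform01 : IsProbabilityMeasure uniform01 := ⟨by simp⟩

lemma lintegral_uniform01_comp_mul_sub (s d : ℝ) (f : ℝ → ℝ≥0∞) :
    ENNReal.ofReal s * ∫⁻ l, f (s * l - d) ∂uniform01 = ∫⁻ v in Set.Icc (-d) (s - d), f v := by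
  rcases le_or_gt s 0 with hs | hs
  · simp [ENNReal.ofReal_of_nonpos hs, Measure.restrict_eq_zero.2]
  have hderiv : ∀ l ∈ Set.Icc (0 : ℝ) 1, HasDerivWithinAt (fun l => s * l - d) s (Set.Icc 0 1) l :=
    fun l _ => by simpa using (((hasDerivAt_id l).const_mul s).sub_const d).hasDerivWithinAt
  have hinj : Set.InjOn (fun l => s * l - d) (Set.Icc 0 1) := fun l _ m _ h => by
    simpa [hs.ne'] using h
  have himage : (fun l => s * l - d) '' Set.Icc 0 1 = Set.Icc (-d) (s - d) := by
    have := Set.image_affine_Icc' hs (-d) 0 1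
    simpa [sub_eq_add_neg] using this
  rw [← himage, lintegral_image_eq_lintegral_abs_deriv_mul measurableSet_Icc hderiv hinj,
    abs_of_pos hs, lintegral_const_mul' _ _ ENNReal.ofReal_ne_top]

lemma lintegral_uniform01_comp_mul (s : ℝ) (f : ℝ → ℝ≥0∞) :
    ENNReal.ofReal s * ∫⁻ l, f (s * l) ∂uniform01 = ∫⁻ v in Set.Icc 0 s, f v := by
  simpa using lintegral_uniform01_comp_mul_sub s 0 f

lemma setLIntegral_Icc_le_add {f : ℝ → ℝ≥0∞} (hf : ∀ v, f v ≤ 1) (a b t : ℝ) :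
    ∫⁻ v in Set.Icc a b, f v ≤ (∫⁻ v in Set.Icc 0 t, f v) + ENNReal.ofReal (|a| + |b - t|) := by
  have hcover : Set.Icc a b ⊆ Set.Icc 0 t ∪ (Set.Ico a 0 ∪ Set.Ioc t b) := fun v hv => by
    simp only [Set.mem_union, Set.mem_Icc, Set.mem_Ico, Set.mem_Ioc] at hv ⊢
    grind
  have hexcess : volume (Set.Ico a 0 ∪ Set.Ioc t b) ≤ ENNReal.ofReal (|a| + |b - t|) := by
    rw [ENNReal.ofReal_add (abs_nonneg _) (abs_nonneg _)]
    refine (measure_union_le _ _).trans (add_le_add ?_ ?_)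
    · rw [Real.volume_Ico, zero_sub]
      exact ENNReal.ofReal_le_ofReal (neg_le_abs a)
    · rw [Real.volume_Ioc]
      exact ENNReal.ofReal_le_ofReal (le_abs_self _)
  calc ∫⁻ v in Set.Icc a b, f v
      ≤ ∫⁻ v in Set.Icc 0 t ∪ (Set.Ico a 0 ∪ Set.Ioc t b), f v := lintegral_mono_set hcover
    _ ≤ (∫⁻ v in Set.Icc 0 t, f v) + ∫⁻ v in Set.Ico a 0 ∪ Set.Ioc t b, f v :=
        lintegral_union_le _ _ _
    _ ≤ (∫⁻ v in Set.Icc 0 t, f v) + ENNReal.ofReal (|a| + |b - t|) := by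
        gcongr
        exact (lintegral_mono fun v => hf v).trans (by simpa using hexcess)

lemma ofReal_div_le_uniform01 {c s : ℝ} (hs : 0 < s) (hcs : c ≤ s) :
    ENNReal.ofReal (c / s) ≤ uniform01 {l | l * s < c} := by
  have hsub : Set.Ico 0 (c / s) ⊆ {l | l * s < c} ∩ Set.Icc 0 1 := fun l hl =>
    ⟨(lt_div_iff₀ hs).1 hl.2, hl.1, hl.2.le.trans ((div_le_one hs).2 hcs)⟩
  calc ENNReal.ofReal (c / s) = volume (Set.Ico 0 (c / s)) := by simp
    _ ≤ volume ({l | l * s < c} ∩ Set.Icc 0 1) := measure_mono hsub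
    _ ≤ uniform01 {l | l * s < c} := Measure.le_restrict_apply _ _

lemma uniform01_eq_one_of_lt {c s : ℝ} (hc : 0 < c) (hsc : s < c) :
    uniform01 {l | l * s < c} = 1 := by
  rw [← prob_compl_eq_zero_iff (measurableSet_lt (by fun_prop) measurable_const), ← mem_ae_iff]
  filter_upwards [ae_restrict_mem measurableSet_Icc] with l hl
  rcases le_total s 0 with h | h
  · exact (mul_nonpos_of_nonneg_of_nonpos hl.1 h).trans_lt hc
  · exact (mul_le_of_le_one_left h hl.2).trans_lt hsc

/-- The uniform laws on `[0, t]` and on `[-d, s - d]` have densities `1 / t` and `1 / s`, and the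
two intervals differ by a set of length at most `ε`. -/
lemma lintegral_uniform01_le_of_intervals_close {f : ℝ → ℝ≥0∞} (hf : ∀ v, f v ≤ 1)
    {ε d s t : ℝ} (hε : 0 < ε) (hst : |d| + |s - d - t| ≤ ε) :
    ∫⁻ l, f (s * l - d) ∂uniform01
      ≤ ∫⁻ l, f (t * l) ∂uniform01 + uniform01 {l | l * t < 3 * ε} := by
  have hle_one : ∀ u : ℝ → ℝ, ∫⁻ l, f (u l) ∂uniform01 ≤ 1 := fun u =>
    (lintegral_mono fun l => hf (u l)).trans_eq (by simp)
  rcases lt_or_ge t (3 * ε) with ht | ht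
  · rw [uniform01_eq_one_of_lt (by positivity) ht]
    exact (hle_one _).trans le_add_self
  have hst_lower : t - ε ≤ s := by
    linarith [neg_abs_le d, neg_abs_le (s - d - t)]
  have hs : 0 < s := by linarith
  have hscaled : ENNReal.ofReal s * ∫⁻ l, f (s * l - d) ∂uniform01
      ≤ ENNReal.ofReal t * ∫⁻ l, f (t * l) ∂uniform01 + ENNReal.ofReal ε := by
    rw [lintegral_uniform01_comp_mul_sub, lintegral_uniform01_comp_mul]
    refine (setLIntegral_Icc_le_add hf (-d) (s - d) t).trans ?_
    gcongr
    rwa [abs_neg]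
  refine le_trans ?_ (add_le_add_right (ofReal_div_le_uniform01 (by linarith) ht) _)
  have hA1 := hle_one fun l => s * l - d
  have hB1 := hle_one fun l => t * l
  lift ∫⁻ l, f (s * l - d) ∂uniform01 to NNReal
    using ne_top_of_le_ne_top ENNReal.one_ne_top hA1 with A
  lift ∫⁻ l, f (t * l) ∂uniform01 to NNReal
    using ne_top_of_le_ne_top ENNReal.one_ne_top hB1 with B
  replace hB1 : (B : ℝ) ≤ 1 := by exact_mod_cast hB1
  have htB : 0 ≤ t * B := mul_nonneg (by linarith) B.coe_nonneg
  rw [← ENNReal.ofReal_coe_nnreal, ← ENNReal.ofReal_coe_nnreal, ← ENNReal.ofReal_mul hs.le,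
    ← ENNReal.ofReal_mul (by linarith), ← ENNReal.ofReal_add htB hε.le,
    ENNReal.ofReal_le_ofReal_iff (by linarith)] at hscaled
  rw [← ENNReal.ofReal_coe_nnreal, ← ENNReal.ofReal_coe_nnreal,
    ← ENNReal.ofReal_add B.coe_nonneg (div_nonneg (by linarith) (by linarith))]
  have hratio : 2 * ε ≤ s * (3 * ε / t) := by
    rw [mul_div_assoc', le_div_iff₀ (by linarith)]
    nlinarith
  have hmass : (t - s) * B ≤ ε := by nlinarith [B.coe_nonneg]
  exact ENNReal.ofReal_le_ofReal (le_of_mul_le_mul_left (by linarith) hs)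

end UniformMeasure

section EdgeLists

lemma measurable_indicator_lt {ι : Type*} (a : ι) (c : ℝ) :
    Measurable ({x : ι → ℝ | x a < c}.indicator (1 : (ι → ℝ) → ℝ≥0∞)) :=
  measurable_one.indicator (measurableSet_lt (measurable_pi_apply a) measurable_const)

variable {α : Type*} [DecidableEq α]

/-- Expectation of `φ` after successive updates of `x` along the edges of the list, with
independent uniform proportions. -/
def meanAlong : List (α × α) → ((α → ℝ) → ℝ≥0∞) → (α → ℝ) → ℝ≥0∞
  | [], φ, x => φ x
  | e :: L, φ, x => ∫⁻ l, meanAlong L φ (resample e.1 e.2 l x) ∂uniform01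

/-- The label of the connected component of a vertex in the graph whose edges are those of the
list. The edges are merged in from the last one to the first. -/
def componentLabel : List (α × α) → α → α
  | [] => id
  | e :: L => fun g =>
      if componentLabel L g = componentLabel L e.2 then componentLabel L e.1 else componentLabel L g

/-- Expected number of updates that join two components of the graph formed by the later edges
and leave mass less than `3 * ε` at the first endpoint: the failure bound of the coupling. -/
def mergeRisk (ε : ℝ) : List (α × α) → (α → ℝ) → ℝ≥0∞
  | [], _ => 0
  | e :: L, y => ∫⁻ l, ((if componentLabel L e.1 = componentLabel L e.2 then 0
      else {x : α → ℝ | x e.1 < 3 * ε}.indicator 1 (resample e.1 e.2 l y))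
        + mergeRisk ε L (resample e.1 e.2 l y)) ∂uniform01

lemma measurable_meanAlong (L : List (α × α)) {φ : (α → ℝ) → ℝ≥0∞} (hφ : Measurable φ) :
    Measurable (meanAlong L φ) := by
  induction L with
  | nil => exact hφ
  | cons e L ih => exact (ih.comp (measurable_resample e.1 e.2)).lintegral_prod_right'

lemma meanAlong_le_one (L : List (α × α)) {φ : (α → ℝ) → ℝ≥0∞} (hφ : ∀ x, φ x ≤ 1) (x : α → ℝ) :
    meanAlong L φ x ≤ 1 := by
  induction L generalizing x with
  | nil => exact hφ x
  | cons e L ih => exact (lintegral_mono fun l => ih _).trans_eq (by simp)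

lemma measurable_mergeRisk (ε : ℝ) (L : List (α × α)) : Measurable (mergeRisk ε L) := by
  induction L with
  | nil => exact measurable_const
  | cons e L ih =>
    have hrisk : Measurable fun y => (if componentLabel L e.1 = componentLabel L e.2 then 0
        else {x : α → ℝ | x e.1 < 3 * ε}.indicator (1 : (α → ℝ) → ℝ≥0∞) y) + mergeRisk ε L y := by
      split_ifs
      · exact measurable_const.add ih
      · exact (measurable_indicator_lt e.1 _).add ih
    exact (hrisk.comp (measurable_resample e.1 e.2)).lintegral_prod_right'

lemma measurable_mergeRisk_resample (ε : ℝ) (a b : α) (L : List (α × α)) (y : α → ℝ) :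
    Measurable fun l => mergeRisk ε L (resample a b l y) :=
  (measurable_mergeRisk ε L).comp ((measurable_resample a b).comp measurable_prodMk_left)

lemma componentLabel_cons_of_eq {a b : α} {L : List (α × α)}
    (h : componentLabel L a = componentLabel L b) :
    componentLabel ((a, b) :: L) = componentLabel L := by
  funext g
  simp only [componentLabel]
  split_ifs with hg
  · rw [hg, h]
  · rfl

lemma componentLabel_eq_of_mem {L : List (α × α)} {e : α × α} (he : e ∈ L) :
    componentLabel L e.1 = componentLabel L e.2 := by
  induction L with
  | nil => simp at he
  | cons f L ih =>
    rcases List.mem_cons.1 he with rfl | he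
    · simp [componentLabel]
    · simp only [componentLabel, ih he]

lemma mergeRisk_cons_of_eq {a b : α} {L : List (α × α)}
    (h : componentLabel L a = componentLabel L b) (ε : ℝ) (y : α → ℝ) :
    mergeRisk ε ((a, b) :: L) y = ∫⁻ l, mergeRisk ε L (resample a b l y) ∂uniform01 := by
  simp [mergeRisk, h]

lemma mergeRisk_cons_of_ne {a b : α} {L : List (α × α)}
    (h : componentLabel L a ≠ componentLabel L b) (ε : ℝ) (y : α → ℝ) :
    mergeRisk ε ((a, b) :: L) y = uniform01 {l | l * (y a + y b) < 3 * ε}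
      + ∫⁻ l, mergeRisk ε L (resample a b l y) ∂uniform01 := by
  rw [← lintegral_indicator_one (measurableSet_lt (by fun_prop) measurable_const),
    ← lintegral_add_right _ (measurable_mergeRisk_resample ε a b L y)]
  simp only [mergeRisk, h, if_false]
  refine lintegral_congr fun l => ?_
  simp [resample, Set.indicator_apply]

/-- The averaging process along the edges of the list: each update replaces the values at both
endpoints by their mean. -/
def averageAlong : List (α × α) → (α → ℝ) → α → ℝ
  | [], v => v
  | e :: L, v => averageAlong L (resample e.1 e.2 (1 / 2) v)

lemma sum_averageAlong {S : Finset α} {L : List (α × α)}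
    (hL : ∀ e ∈ L, e.1 ≠ e.2) (hS : ∀ e ∈ L, (e.1 ∈ S ↔ e.2 ∈ S)) (v : α → ℝ) :
    ∑ g ∈ S, averageAlong L v g = ∑ g ∈ S, v g := by
  induction L generalizing v with
  | nil => rfl
  | cons e L ih =>
    simp only [List.mem_cons, forall_eq_or_imp] at hL hS
    rw [averageAlong, ih hL.2 hS.2, sum_resample hL.1 hS.1]

end EdgeLists

section Coupling

lemma abs_sum_sub_le {ι : Type*} {S : Finset ι} {a : ι} (ha : a ∈ S) (w : ι → ℝ) :
    |∑ g ∈ S, w g - w a| ≤ ∑ g ∈ S, |w g| - |w a| := by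
  classical
  rw [← Finset.sum_erase_eq_sub ha, ← Finset.sum_erase_eq_sub ha]
  exact Finset.abs_sum_le_sum_abs _ _

variable {α : Type*} [Fintype α] [DecidableEq α]

/-- The connected component with label `c` of the graph formed by the edges of the list. -/
def component (L : List (α × α)) (c : α) : Finset α := {g | componentLabel L g = c}

/-- A discrepancy that has total zero and total variation at most `ε` on every component. Such a
discrepancy can be removed by the updates along the list. -/
def ComponentwiseBalanced (ε : ℝ) (L : List (α × α)) (w : α → ℝ) : Prop :=
  ∀ c, ∑ g ∈ component L c, w g = 0 ∧ ∑ g ∈ component L c, |w g| ≤ ε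

@[simp]
lemma mem_component {L : List (α × α)} {c g : α} : g ∈ component L c ↔ componentLabel L g = c := by
  simp [component]

lemma component_nil (c : α) : component [] c = {c} := by
  ext g
  simp [componentLabel]

lemma component_cons_of_eq {a b : α} {L : List (α × α)}
    (h : componentLabel L a = componentLabel L b) (c : α) :
    component ((a, b) :: L) c = component L c := by
  rw [component, componentLabel_cons_of_eq h, component]

lemma component_cons_of_ne {a b c : α} {L : List (α × α)} (ha : componentLabel L a ≠ c)
    (hb : componentLabel L b ≠ c) : component ((a, b) :: L) c = component L c := by
  ext g
  simp only [mem_component, componentLabel]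
  split_ifs with hg
  · simp [hg, ha, hb]
  · rfl

lemma component_cons_left (a b : α) (L : List (α × α)) :
    component ((a, b) :: L) (componentLabel L a)
      = component L (componentLabel L a) ∪ component L (componentLabel L b) := by
  ext g
  simp only [mem_component, Finset.mem_union, componentLabel]
  split_ifs with hg <;> simp [hg]

lemma ComponentwiseBalanced.resample {ε : ℝ} {a b : α} (hab : a ≠ b) {L : List (α × α)}
    (hL : componentLabel L a = componentLabel L b) {w : α → ℝ}
    (hw : ComponentwiseBalanced ε ((a, b) :: L) w) {l : ℝ} (hl : l ∈ Set.Icc (0 : ℝ) 1) :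
    ComponentwiseBalanced ε L (resample a b l w) := by
  intro c
  have hc := hw c
  rw [component_cons_of_eq hL] at hc
  have hmem : a ∈ component L c ↔ b ∈ component L c := by simp [hL]
  refine ⟨(sum_resample hab hmem l w).trans hc.1,
    (le_of_eq_of_le (sum_comp_redistribute hab (component L c) abs _ w) ?_).trans hc.2⟩
  have hsplit : |l * (w a + w b)| + |w a + w b - l * (w a + w b)| ≤ |w a| + |w b| := by
    rw [← one_sub_mul, abs_mul, abs_mul, abs_of_nonneg hl.1, abs_of_nonneg (sub_nonneg.2 hl.2)]
    linarith [abs_add_le (w a) (w b)]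
  simp only [← hmem]
  split_ifs <;> linarith

/-- The amount `d` is chosen to make the total on the component of `a` vanish. -/
lemma ComponentwiseBalanced.exists_redistribute {ε : ℝ} {a b : α} {L : List (α × α)}
    (hL : componentLabel L a ≠ componentLabel L b) {w : α → ℝ}
    (hw : ComponentwiseBalanced ε ((a, b) :: L) w) :
    ∃ d : ℝ, |d| + |w a + w b - d| ≤ ε ∧ ComponentwiseBalanced ε L (redistribute a b d w) := by
  have hab : a ≠ b := fun h => hL (h ▸ rfl)
  have hdisj : Disjoint (component L (componentLabel L a)) (component L (componentLabel L b)) :=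
    Finset.disjoint_left.2 fun g hga hgb => hL ((mem_component.1 hga).symm.trans
      (mem_component.1 hgb))
  obtain ⟨hsum, habs⟩ := hw (componentLabel L a)
  rw [component_cons_left, Finset.sum_union hdisj] at hsum habs
  have hA := abs_sum_sub_le (mem_component.2 rfl : a ∈ component L (componentLabel L a)) w
  have hB := abs_sum_sub_le (mem_component.2 rfl : b ∈ component L (componentLabel L b)) w
  set d := w a - ∑ g ∈ component L (componentLabel L a), w g with hd
  have hd' : w a + w b - d = w b - ∑ g ∈ component L (componentLabel L b), w g := by linarith
  rw [abs_sub_comm, ← hd] at hA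
  rw [abs_sub_comm, ← hd'] at hB
  refine ⟨d, by linarith [abs_nonneg (w a), abs_nonneg (w b)], fun c => ?_⟩
  have hsum_new := sum_comp_redistribute hab (component L c) id d w
  have habs_new := sum_comp_redistribute hab (component L c) abs d w
  simp only [id_eq] at hsum_new
  rw [hsum_new, habs_new]
  simp only [mem_component]
  have hd_le : |d| ≤ |w a + w b - d| + |w a| + |w b| := by
    calc |d| = |w a + w b - (w a + w b - d)| := by congr 1; ring
      _ ≤ |w a + w b| + |w a + w b - d| := abs_sub _ _
      _ ≤ |w a + w b - d| + |w a| + |w b| := by linarith [abs_add_le (w a) (w b)]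
  have hd'_le : |w a + w b - d| ≤ |d| + |w a| + |w b| := by
    linarith [abs_sub (w a + w b) d, abs_add_le (w a) (w b)]
  by_cases ha : componentLabel L a = c
  · subst ha
    simp only [if_true, hL.symm, if_false]
    exact ⟨by linarith, by linarith⟩
  by_cases hb : componentLabel L b = c
  · subst hb
    simp only [if_true, hL, if_false]
    exact ⟨by linarith, by linarith⟩
  · simpa [ha, hb, component_cons_of_ne ha hb] using hw c

/-- The coupling uses the same proportion `l` for both starting points, except at an edge joining
two components of the later graph, where the new masses at the first endpoint are coupled to differ
by the amount that balances the discrepancy on both components. -/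
theorem meanAlong_le_add_mergeRisk {ε : ℝ} (hε : 0 < ε) {φ : (α → ℝ) → ℝ≥0∞}
    (hφ : ∀ x, φ x ≤ 1) {L : List (α × α)} (hL : ∀ e ∈ L, e.1 ≠ e.2) {x y : α → ℝ}
    (hxy : ComponentwiseBalanced ε L (x - y)) :
    meanAlong L φ x ≤ meanAlong L φ y + mergeRisk ε L y := by
  induction L generalizing x y with
  | nil =>
    have : x = y := funext fun g => by
      simpa [component_nil, sub_eq_zero] using (hxy g).1
    rw [this]
    exact le_self_add
  | cons e L ih =>
    obtain ⟨a, b⟩ := e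
    have hab : a ≠ b := hL (a, b) List.mem_cons_self
    replace ih := @ih fun e he => hL e (List.mem_cons_of_mem _ he)
    have hrisk := measurable_mergeRisk_resample ε a b L y
    by_cases hlabel : componentLabel L a = componentLabel L b
    · rw [mergeRisk_cons_of_eq hlabel, meanAlong, meanAlong, ← lintegral_add_right _ hrisk]
      refine setLIntegral_mono' measurableSet_Icc fun l hl => ih ?_
      rw [resample_sub hab]
      exact hxy.resample hab hlabel hl
    obtain ⟨d, hd, hbalanced⟩ := hxy.exists_redistribute hlabel
    have hclose := lintegral_uniform01_le_of_intervals_close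
      (f := fun v => meanAlong L φ (redistribute a b (v + d) x)) (s := x a + x b) (t := y a + y b)
      (fun v => meanAlong_le_one L hφ _) hε (d := d) (by
        convert hd using 3
        simp only [Pi.sub_apply]
        ring)
    have hshifted : ∫⁻ l, meanAlong L φ (redistribute a b ((y a + y b) * l + d) x) ∂uniform01
        ≤ meanAlong ((a, b) :: L) φ y + ∫⁻ l, mergeRisk ε L (resample a b l y) ∂uniform01 := by
      rw [meanAlong, ← lintegral_add_right _ hrisk]
      refine lintegral_mono fun l => ih ?_
      rw [resample, redistribute_sub hab, mul_comm l, add_sub_cancel_left]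
      exact hbalanced
    calc meanAlong ((a, b) :: L) φ x
        = ∫⁻ l, meanAlong L φ (redistribute a b ((x a + x b) * l - d + d) x) ∂uniform01 := by
          simp only [meanAlong, resample, sub_add_cancel, mul_comm]
      _ ≤ _ := hclose
      _ ≤ _ := add_le_add_left hshifted _
      _ = meanAlong ((a, b) :: L) φ y + mergeRisk ε ((a, b) :: L) y := by
          rw [mergeRisk_cons_of_ne hlabel, add_assoc, add_comm (lintegral _ _)]

end Coupling

section Components

variable {α : Type*} [Fintype α] [DecidableEq α]

/-- The number of connected components of the graph formed by the edges of the list. -/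
def componentCount (L : List (α × α)) : ℕ := (Finset.univ.image (componentLabel L)).card

/-- The edges of the list form a connected graph. -/
def Connects (L : List (α × α)) : Prop := ∀ g h, componentLabel L g = componentLabel L h

/-- The measure is invariant under the update of the Gibbs sampler along any pair of distinct
coordinates. -/
def ResampleInvariant (U : Measure (α → ℝ)) : Prop :=
  ∀ a b, a ≠ b → ∀ f : (α → ℝ) → ℝ≥0∞, Measurable f →
    ∫⁻ y, ∫⁻ l, f (resample a b l y) ∂uniform01 ∂U = ∫⁻ y, f y ∂U

lemma Connects.componentwiseBalanced {L : List (α × α)} (hL : Connects L) {ε : ℝ} (hε : 0 ≤ ε)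
    {w : α → ℝ} (hsum : ∑ g, w g = 0) (habs : ∑ g, |w g| ≤ ε) : ComponentwiseBalanced ε L w := by
  intro c
  by_cases hc : ∃ g, componentLabel L g = c
  · obtain ⟨g, rfl⟩ := hc
    have huniv : component L (componentLabel L g) = Finset.univ := by
      ext h
      simp [hL h g]
    rw [huniv]
    exact ⟨hsum, habs⟩
  · have hempty : component L c = ∅ := Finset.eq_empty_of_forall_notMem fun g hg =>
      hc ⟨g, mem_component.1 hg⟩
    simp [hempty, hε]

lemma componentCount_nil : componentCount ([] : List (α × α)) = Fintype.card α := by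
  simp [componentCount, componentLabel]

lemma componentCount_cons_of_eq {a b : α} {L : List (α × α)}
    (h : componentLabel L a = componentLabel L b) :
    componentCount ((a, b) :: L) = componentCount L := by
  rw [componentCount, componentLabel_cons_of_eq h, componentCount]

lemma componentCount_cons_lt {a b : α} {L : List (α × α)}
    (h : componentLabel L a ≠ componentLabel L b) :
    componentCount ((a, b) :: L) < componentCount L := by
  refine Finset.card_lt_card ((Finset.ssubset_iff_of_subset ?_).2
    ⟨componentLabel L b, Finset.mem_image_of_mem _ (Finset.mem_univ b), ?_⟩)
  · simp only [Finset.image_subset_iff, Finset.mem_image, Finset.mem_univ, true_and, componentLabel,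
      forall_const]
    intro g
    split_ifs
    exacts [⟨a, rfl⟩, ⟨g, rfl⟩]
  · simp only [Finset.mem_image, Finset.mem_univ, true_and, componentLabel, not_exists]
    intro g
    split_ifs with hg
    exacts [h, hg]

/-- Every merging update lowers the number of components, and by invariance each of them
contributes at most `p` to the risk. -/
lemma lintegral_mergeRisk_add_le {U : Measure (α → ℝ)} (hU : ResampleInvariant U) {ε : ℝ}
    {p : ℝ≥0∞} (hp : ∀ a, U {y | y a < 3 * ε} ≤ p) {L : List (α × α)}
    (hL : ∀ e ∈ L, e.1 ≠ e.2) :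
    ∫⁻ y, mergeRisk ε L y ∂U + componentCount L * p ≤ Fintype.card α * p := by
  induction L with
  | nil => simp [mergeRisk, componentCount_nil]
  | cons e L ih =>
    obtain ⟨a, b⟩ := e
    have hab : a ≠ b := hL (a, b) List.mem_cons_self
    replace ih := ih fun e he => hL e (List.mem_cons_of_mem _ he)
    by_cases h : componentLabel L a = componentLabel L b
    · simp only [mergeRisk_cons_of_eq h, componentCount_cons_of_eq h]
      rwa [hU a b hab _ (measurable_mergeRisk ε L)]
    have hrisk : ∫⁻ y, mergeRisk ε ((a, b) :: L) y ∂U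
        = U {y | y a < 3 * ε} + ∫⁻ y, mergeRisk ε L y ∂U := by
      simp only [mergeRisk, h, if_false]
      rw [hU a b hab (fun y => {x | x a < 3 * ε}.indicator 1 y + mergeRisk ε L y)
          ((measurable_indicator_lt a _).add (measurable_mergeRisk ε L)),
        lintegral_add_right _ (measurable_mergeRisk ε L),
        lintegral_indicator_one (measurableSet_lt (measurable_pi_apply a) measurable_const)]
    have hcount : (componentCount ((a, b) :: L) : ℝ≥0∞) + 1 ≤ componentCount L := by
      exact_mod_cast componentCount_cons_lt h
    calc ∫⁻ y, mergeRisk ε ((a, b) :: L) y ∂U + componentCount ((a, b) :: L) * p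
        ≤ p + ∫⁻ y, mergeRisk ε L y ∂U + componentCount ((a, b) :: L) * p := by
          rw [hrisk]
          gcongr
          exact hp a
      _ = ∫⁻ y, mergeRisk ε L y ∂U + (componentCount ((a, b) :: L) + 1) * p := by ring
      _ ≤ ∫⁻ y, mergeRisk ε L y ∂U + componentCount L * p := by gcongr
      _ ≤ Fintype.card α * p := ih

/-- The point mass at `o` minus the uniform distribution. -/
def centeredPointMass (o : α) : α → ℝ := fun g => (Pi.single o 1 : α → ℝ) g - 1 / Fintype.card α

/-- The components that do not contain `o` never receive any of the mass started at `o`. -/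
lemma one_div_sq_le_sum_sq_averageAlong (o : α) {L : List (α × α)} (hL : ∀ e ∈ L, e.1 ≠ e.2)
    (hconn : ¬ Connects L) : 1 / (Fintype.card α : ℝ) ^ 2 ≤
    ∑ g, averageAlong L (centeredPointMass o) g ^ 2 := by
  set n : ℝ := (Fintype.card α : ℝ)
  set v := centeredPointMass o
  set S : Finset α := {g | componentLabel L g ≠ componentLabel L o}
  have hS : S.Nonempty := by
    simp only [Connects, not_forall] at hconn
    obtain ⟨g, h, hgh⟩ := hconn
    by_contra hempty
    simp only [S, Finset.not_nonempty_iff_eq_empty, Finset.filter_eq_empty_iff, Finset.mem_univ,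
      not_not, forall_const] at hempty
    exact hgh (by rw [@hempty g, @hempty h])
  have hcard : (1 : ℝ) ≤ S.card := by exact_mod_cast hS.card_pos
  have hsum : ∑ g ∈ S, averageAlong L v g = -(S.card / n) := by
    rw [sum_averageAlong hL (fun e he => by simp [S, componentLabel_eq_of_mem he]),
      Finset.sum_congr rfl (g := fun _ => -(1 / n))]
    · simp [div_eq_mul_inv]
    · intro g hg
      have hgo : g ≠ o := fun h => (Finset.mem_filter.1 hg).2 (h ▸ rfl)
      simp [v, centeredPointMass, hgo, n]
  have hcauchy : (S.card : ℝ) * (S.card / n ^ 2) ≤ S.card * ∑ g ∈ S, averageAlong L v g ^ 2 := by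
    refine le_of_eq_of_le ?_ (sq_sum_le_card_mul_sum_sq (s := S) (f := averageAlong L v))
    rw [hsum]
    ring
  calc 1 / n ^ 2 ≤ S.card / n ^ 2 := by gcongr
    _ ≤ ∑ g ∈ S, averageAlong L v g ^ 2 := le_of_mul_le_mul_left hcauchy (by linarith)
    _ ≤ ∑ g, averageAlong L v g ^ 2 :=
      Finset.sum_le_sum_of_subset_of_nonneg (Finset.subset_univ _) fun g _ _ => sq_nonneg _

end Components

section Simplex

/-- The region under the standard simplex: nonnegative coordinates with sum at most one. -/
def cornerSimplex (ι : Type*) [Fintype ι] : Set (ι → ℝ) := {y | (∀ i, 0 ≤ y i) ∧ ∑ i, y i ≤ 1}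

lemma isClosed_cornerSimplex (ι : Type*) [Fintype ι] : IsClosed (cornerSimplex ι) := by
  have : cornerSimplex ι = (⋂ i, {y : ι → ℝ | 0 ≤ y i}) ∩ {y | ∑ i, y i ≤ 1} := by
    ext y
    simp [cornerSimplex]
  rw [this]
  exact (isClosed_iInter fun i => isClosed_le continuous_const (continuous_apply i)).inter
    (isClosed_le (by fun_prop) continuous_const)

lemma isCompact_cornerSimplex (ι : Type*) [Fintype ι] : IsCompact (cornerSimplex ι) :=
  (isCompact_univ_pi fun _ => isCompact_Icc (a := (0 : ℝ)) (b := 1)).of_isClosed_subset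
    (isClosed_cornerSimplex ι) fun _ hy i _ =>
      ⟨hy.1 i, (Finset.single_le_sum (fun j _ => hy.1 j) (Finset.mem_univ i)).trans hy.2⟩

lemma volume_cornerSimplex_pos (ι : Type*) [Fintype ι] : 0 < volume (cornerSimplex ι) := by
  set N : ℝ := Fintype.card ι + 1 with hN
  have hN0 : 0 < N := by positivity
  have hcube : Set.univ.pi (fun _ : ι => Set.Ioo 0 (1 / N)) ⊆ cornerSimplex ι := fun y hy =>
    ⟨fun i => (hy i trivial).1.le, by
      calc ∑ i, y i ≤ ∑ _i : ι, 1 / N := Finset.sum_le_sum fun i _ => (hy i trivial).2.le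
        _ = Fintype.card ι * (1 / N) := by simp
        _ ≤ 1 := by rw [mul_one_div, div_le_one hN0, hN]; linarith⟩
  refine lt_of_lt_of_le (IsOpen.measure_pos _ (isOpen_set_pi Set.finite_univ fun _ _ => isOpen_Ioo)
    ⟨fun _ => 1 / N / 2, fun _ _ => ⟨by positivity, half_lt_self (by positivity)⟩⟩)
    (measure_mono hcube)

lemma update_mem_cornerSimplex_iff {ι : Type*} [Fintype ι] [DecidableEq ι] (y : ι → ℝ) (i : ι)
    (v : ℝ) : Function.update y i v ∈ cornerSimplex ι ↔
      (∀ j ≠ i, 0 ≤ y j) ∧ v ∈ Set.Icc 0 (1 - ∑ j, y j + y i) := by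
  have hsum := sum_comp_update Finset.univ id i v y
  simp only [id_eq, Finset.mem_univ, if_true] at hsum
  simp only [cornerSimplex, Set.mem_ofPred_eq, hsum, Set.mem_Icc]
  constructor
  · rintro ⟨hpos, hle⟩
    refine ⟨fun j hj => by simpa [hj] using hpos j, by simpa using hpos i, by linarith⟩
  · rintro ⟨hpos, hv, hle⟩
    refine ⟨fun j => ?_, by linarith⟩
    rcases eq_or_ne j i with rfl | hj
    · simpa using hv
    · simpa [hj] using hpos j hj

/-- On every line parallel to the `i`-th axis, this resamples from the uniform law on the segment
cut out by the corner simplex. -/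
lemma lintegral_cornerSimplex_update {ι : Type*} [Fintype ι] [DecidableEq ι] (i : ι)
    {f : (ι → ℝ) → ℝ≥0∞} (hf : Measurable f) :
    ∫⁻ y in cornerSimplex ι, ∫⁻ l, f (Function.update y i (l * (1 - ∑ j, y j + y i))) ∂uniform01
      = ∫⁻ y in cornerSimplex ι, f y := by
  have hmeas := (isClosed_cornerSimplex ι).measurableSet
  have hupdate : Measurable fun p : (ι → ℝ) × ℝ =>
      Function.update p.1 i (p.2 * (1 - ∑ j, p.1 j + p.1 i)) := by
    refine measurable_pi_iff.2 fun j => ?_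
    simp only [Function.update_apply]
    split_ifs <;> fun_prop
  have hmean : Measurable fun y : ι → ℝ =>
      ∫⁻ l, f (Function.update y i (l * (1 - ∑ j, y j + y i))) ∂uniform01 :=
    (hf.comp hupdate).lintegral_prod_right'
  rw [← lintegral_indicator hmeas, ← lintegral_indicator hmeas]
  refine lintegral_eq_of_lmarginal_eq {i} (hmean.indicator hmeas) (hf.indicator hmeas) ?_
  rw [lmarginal_singleton, lmarginal_singleton]
  funext y
  have hslack : ∀ v, 1 - ∑ j, Function.update y i v j + v = 1 - ∑ j, y j + y i := fun v => by
    have hsum := sum_comp_update Finset.univ id i v y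
    simp only [id_eq, Finset.mem_univ, if_true] at hsum
    rw [hsum]
    ring
  by_cases hy : ∀ j ≠ i, 0 ≤ y j
  · have hslice : ∀ F : (ι → ℝ) → ℝ≥0∞,
        ∫⁻ v, (cornerSimplex ι).indicator F (Function.update y i v)
          = ∫⁻ v in Set.Icc 0 (1 - ∑ j, y j + y i), F (Function.update y i v) := fun F => by
      rw [← lintegral_indicator measurableSet_Icc]
      refine lintegral_congr fun v => ?_
      have hmem : Function.update y i v ∈ cornerSimplex ι ↔ v ∈ Set.Icc 0 (1 - ∑ j, y j + y i) := by
        simp only [update_mem_cornerSimplex_iff, ne_eq, and_iff_right_iff_imp]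
        exact fun _ => hy
      by_cases hv : v ∈ Set.Icc 0 (1 - ∑ j, y j + y i)
      · rw [Set.indicator_of_mem (hmem.2 hv), Set.indicator_of_mem hv]
      · rw [Set.indicator_of_notMem (mt hmem.1 hv), Set.indicator_of_notMem hv]
    rw [hslice, hslice, ← lintegral_uniform01_comp_mul _ fun v => f (Function.update y i v)]
    simp only [Function.update_idem, Function.update_self, hslack, setLIntegral_const,
      Real.volume_Icc, sub_zero]
    rw [mul_comm]
    simp only [mul_comm]
  · have hempty : ∀ v, Function.update y i v ∉ cornerSimplex ι := fun v hv =>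
      hy ((update_mem_cornerSimplex_iff y i v).1 hv).1
    simp [hempty]

variable {α : Type*} [Fintype α] [DecidableEq α]

/-- The linear isomorphism of `ℝ^(α ∖ {z})` onto the hyperplane of vectors with coordinate sum
zero that is inverse to forgetting the coordinate `z`. -/
def sumZeroLift (z : α) : ({g // g ≠ z} → ℝ) →ₗ[ℝ] (α → ℝ) :=
  LinearMap.pi fun g => if h : g = z then -∑ i, LinearMap.proj i else LinearMap.proj ⟨g, h⟩

/-- The affine parametrization of the hyperplane of vectors with coordinate sum one that is
inverse to forgetting the coordinate `z`. -/
def hyperplaneChart (z : α) (y : {g // g ≠ z} → ℝ) : α → ℝ := Pi.single z 1 + sumZeroLift z y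

@[simp]
lemma hyperplaneChart_self (z : α) (y : {g // g ≠ z} → ℝ) :
    hyperplaneChart z y z = 1 - ∑ i, y i := by
  simp [hyperplaneChart, sumZeroLift, sub_eq_add_neg]

lemma hyperplaneChart_of_ne {z g : α} (hg : g ≠ z) (y : {g // g ≠ z} → ℝ) :
    hyperplaneChart z y g = y ⟨g, hg⟩ := by
  simp [hyperplaneChart, sumZeroLift, hg]

lemma sumZeroLift_injective (z : α) : Function.Injective (sumZeroLift z) := fun y y' h => by
  funext i
  simpa [sumZeroLift, i.2] using congrFun h i.1

lemma measurableEmbedding_sumZeroLift (z : α) : MeasurableEmbedding (sumZeroLift z) :=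
  (sumZeroLift z).continuous_of_finiteDimensional.measurableEmbedding (sumZeroLift_injective z)

lemma measurableEmbedding_hyperplaneChart (z : α) : MeasurableEmbedding (hyperplaneChart z) :=
  (measurableEmbedding_addLeft _).comp (measurableEmbedding_sumZeroLift z)

lemma hyperplaneChart_image_cornerSimplex (z : α) :
    hyperplaneChart z '' cornerSimplex {g // g ≠ z} = simplexG α := by
  ext x
  constructor
  · rintro ⟨y, hy, rfl⟩
    refine ⟨fun g => ?_, ?_⟩
    · rcases eq_or_ne g z with rfl | hg
      · simpa using hy.2
      · simpa [hyperplaneChart_of_ne hg] using hy.1 _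
    · rw [Fintype.sum_eq_add_sum_subtype_ne _ z, hyperplaneChart_self,
        Finset.sum_congr rfl fun i _ => hyperplaneChart_of_ne i.2 y, sub_add_cancel]
  · rintro ⟨hpos, hsum⟩
    rw [Fintype.sum_eq_add_sum_subtype_ne x z] at hsum
    refine ⟨fun i => x i, ⟨fun i => hpos _, by linarith [hpos z]⟩, ?_⟩
    funext g
    rcases eq_or_ne g z with rfl | hg
    · rw [hyperplaneChart_self]
      linarith
    · rw [hyperplaneChart_of_ne hg]

lemma hyperplaneChart_update {a b : α} (hab : a ≠ b) (l : ℝ) (y : {g // g ≠ b} → ℝ) :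
    hyperplaneChart b (Function.update y ⟨a, hab⟩ (l * (1 - ∑ i, y i + y ⟨a, hab⟩)))
      = resample a b l (hyperplaneChart b y) := by
  funext g
  rcases eq_or_ne g a with rfl | ha
  · simp only [resample, redistribute_left, hyperplaneChart_of_ne hab, hyperplaneChart_self,
      Function.update_self]
    ring
  rcases eq_or_ne g b with rfl | hb
  · have hsum := sum_comp_update Finset.univ id ⟨a, hab⟩ (l * (1 - ∑ i, y i + y ⟨a, hab⟩)) y
    simp only [id_eq, Finset.mem_univ, if_true] at hsum
    simp only [resample, redistribute_right hab, hyperplaneChart_of_ne hab, hyperplaneChart_self,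
      hsum]
    ring
  · have hne : (⟨g, hb⟩ : {g // g ≠ b}) ≠ ⟨a, hab⟩ := fun h => ha (congrArg Subtype.val h)
    rw [resample, redistribute_of_ne ha hb, hyperplaneChart_of_ne hb, hyperplaneChart_of_ne hb,
      Function.update_of_ne hne]

lemma card_subtype_ne (z : α) : (Fintype.card {g // g ≠ z} : ℝ) = Fintype.card α - 1 := by
  have hpos : 0 < Fintype.card α := Fintype.card_pos_iff.2 ⟨z⟩
  simp [Fintype.card_subtype_compl, Nat.cast_sub (Nat.succ_le_of_lt hpos)]

lemma hausdorffMeasure_card_sub_one (z : α) :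
    (μH[(Fintype.card α : ℝ) - 1] : Measure ({g // g ≠ z} → ℝ)) = volume := by
  rw [← card_subtype_ne z, hausdorffMeasure_pi_real]

lemma hausdorffMeasure_sumZeroLift_image_lt_top (z : α) {B : Set ({g // g ≠ z} → ℝ)}
    (hB : volume B < ⊤) : μH[(Fintype.card α : ℝ) - 1] (sumZeroLift z '' B) < ⊤ := by
  have hdim : 0 ≤ (Fintype.card α : ℝ) - 1 := by
    rw [← card_subtype_ne z]
    positivity
  have hlip := (LinearMap.toContinuousLinearMap (sumZeroLift z)).lipschitz
  refine (hlip.hausdorffMeasure_image_le hdim B).trans_lt ?_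
  rw [hausdorffMeasure_card_sub_one]
  exact ENNReal.mul_lt_top (ENNReal.rpow_lt_top_of_nonneg hdim ENNReal.coe_ne_top) hB

lemma hausdorffMeasure_hyperplaneChart_image (z : α) (B : Set ({g // g ≠ z} → ℝ)) (d : ℝ) :
    μH[d] (hyperplaneChart z '' B) = μH[d] (sumZeroLift z '' B) := by
  have htranslate := (IsometryEquiv.addLeft (Pi.single z 1 : α → ℝ)).hausdorffMeasure_image d
    (sumZeroLift z '' B)
  rwa [Set.image_image] at htranslate

/-- Uniqueness of Haar measure: the Hausdorff measure on the hyperplane is translation invariant. -/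
lemma exists_comap_hyperplaneChart_eq_smul_volume (z : α) :
    ∃ c : NNReal, Measure.comap (hyperplaneChart z) μH[(Fintype.card α : ℝ) - 1]
      = c • (volume : Measure ({g // g ≠ z} → ℝ)) := by
  have hcomap : Measure.comap (hyperplaneChart z) μH[(Fintype.card α : ℝ) - 1]
      = Measure.comap (sumZeroLift z).toAddMonoidHom μH[(Fintype.card α : ℝ) - 1] := by
    ext B -
    rw [(measurableEmbedding_hyperplaneChart z).comap_apply, hausdorffMeasure_hyperplaneChart_image]
    exact ((measurableEmbedding_sumZeroLift z).comap_apply _ _).symm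
  have hinv := Measure.IsAddLeftInvariant.comap (μH[(Fintype.card α : ℝ) - 1] : Measure (α → ℝ))
    (f := (sumZeroLift z).toAddMonoidHom) (measurableEmbedding_sumZeroLift z)
  have hfin : IsFiniteMeasureOnCompacts
      (Measure.comap (sumZeroLift z).toAddMonoidHom μH[(Fintype.card α : ℝ) - 1]) := ⟨fun K hK => by
    rw [(show MeasurableEmbedding (sumZeroLift z).toAddMonoidHom from
      measurableEmbedding_sumZeroLift z).comap_apply]
    exact hausdorffMeasure_sumZeroLift_image_lt_top z hK.measure_lt_top⟩
  exact ⟨_, hcomap.trans (Measure.isAddLeftInvariant_eq_smul _ volume)⟩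

lemma exists_lintegral_simplexG_eq (z : α) : ∃ c : NNReal, ∀ f : (α → ℝ) → ℝ≥0∞,
    ∫⁻ x in simplexG α, f x ∂μH[(Fintype.card α : ℝ) - 1]
      = c * ∫⁻ y in cornerSimplex {g // g ≠ z}, f (hyperplaneChart z y) := by
  obtain ⟨c, hc⟩ := exists_comap_hyperplaneChart_eq_smul_volume z
  refine ⟨c, fun f => ?_⟩
  have hemb := measurableEmbedding_hyperplaneChart z
  have hrestrict : (μH[(Fintype.card α : ℝ) - 1]).restrict (simplexG α)
      = Measure.map (hyperplaneChart z) ((Measure.comap (hyperplaneChart z)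
        μH[(Fintype.card α : ℝ) - 1]).restrict (cornerSimplex {g // g ≠ z})) := by
    rw [hemb.restrict_comap, hemb.map_comap, hyperplaneChart_image_cornerSimplex,
      Measure.restrict_restrict hemb.measurableSet_range, Set.inter_eq_right.2]
    rw [← hyperplaneChart_image_cornerSimplex z]
    exact Set.image_subset_range _ _
  rw [hrestrict, hemb.lintegral_map, hc, Measure.restrict_smul, lintegral_smul_measure]
  rfl

theorem resampleInvariant_UG : ResampleInvariant (UG α) := by
  intro a b hab f hf
  obtain ⟨c, hc⟩ := exists_lintegral_simplexG_eq b
  simp only [UG, lintegral_smul_measure, hc, ← hyperplaneChart_update hab]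
  rw [lintegral_cornerSimplex_update ⟨a, hab⟩
    (f := fun y => f (hyperplaneChart b y))
    (hf.comp (measurableEmbedding_hyperplaneChart b).measurable)]

lemma homothety_image_simplexG_subset (i : α) {δ : ℝ} (hδ0 : 0 ≤ δ) (hδ1 : δ ≤ 1) :
    AffineMap.homothety (Pi.single i 1 : α → ℝ) (1 - δ) '' simplexG α
      ⊆ {y | δ ≤ y i} ∩ simplexG α := by
  rintro _ ⟨x, hx, rfl⟩
  rw [AffineMap.homothety_eq_lineMap]
  refine ⟨?_, (convex_stdSimplex ℝ α).lineMap_mem (single_mem_stdSimplex ℝ i) hx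
    ⟨by linarith, by linarith⟩⟩
  have := mul_nonneg (sub_nonneg.2 hδ1) (hx.1 i)
  simp only [Set.mem_ofPred_eq, AffineMap.lineMap_apply_module, Pi.add_apply, Pi.smul_apply,
    Pi.single_eq_same, smul_eq_mul]
  linarith

end Simplex

section UniformLaw

variable {α : Type*} [Fintype α]

lemma hausdorffMeasure_simplexG_ne_top [Nonempty α] :
    μH[(Fintype.card α : ℝ) - 1] (simplexG α) ≠ ⊤ := by
  classical
  obtain ⟨z⟩ := ‹Nonempty α›
  rw [← hyperplaneChart_image_cornerSimplex z, hausdorffMeasure_hyperplaneChart_image]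
  exact (hausdorffMeasure_sumZeroLift_image_lt_top z
    (isCompact_cornerSimplex _).measure_lt_top).ne

/-- Forgetting a coordinate maps the simplex onto the corner simplex without increasing
distances. -/
lemma hausdorffMeasure_simplexG_ne_zero [Nonempty α] :
    μH[(Fintype.card α : ℝ) - 1] (simplexG α) ≠ 0 := fun hzero => by
  classical
  obtain ⟨z⟩ := ‹Nonempty α›
  have hlip : LipschitzWith 1 fun (x : α → ℝ) (i : {g // g ≠ z}) => x i :=
    LipschitzWith.of_dist_le_mul fun x y => by
      simpa using (dist_pi_le_iff dist_nonneg).2 fun i : {g // g ≠ z} => dist_le_pi_dist x y i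
  have hcorner : cornerSimplex {g // g ≠ z} ⊆
      (fun (x : α → ℝ) (i : {g // g ≠ z}) => x i) '' simplexG α := fun y hy =>
    ⟨hyperplaneChart z y, hyperplaneChart_image_cornerSimplex z ▸ Set.mem_image_of_mem _ hy,
      funext fun i => hyperplaneChart_of_ne i.2 y⟩
  have hdim : 0 ≤ (Fintype.card α : ℝ) - 1 := by
    rw [← card_subtype_ne z]
    positivity
  have hle := hlip.hausdorffMeasure_image_le hdim (simplexG α)
  rw [hzero, mul_zero, hausdorffMeasure_card_sub_one] at hle
  exact (volume_cornerSimplex_pos _).not_ge ((measure_mono hcorner).trans hle)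

lemma isProbabilityMeasure_UG [Nonempty α] : IsProbabilityMeasure (UG α) := ⟨by
  simp only [UG, Measure.smul_apply, Measure.restrict_apply_univ, smul_eq_mul]
  exact ENNReal.inv_mul_cancel hausdorffMeasure_simplexG_ne_zero hausdorffMeasure_simplexG_ne_top⟩

lemma ae_UG_mem_simplexG : ∀ᵐ y ∂(UG α), y ∈ simplexG α :=
  Measure.ae_smul_measure (ae_restrict_mem (isClosed_stdSimplex ℝ α).measurableSet) _

lemma ofReal_pow_le_UG (i : α) {δ : ℝ} (hδ0 : 0 ≤ δ) (hδ1 : δ < 1) :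
    ENNReal.ofReal ((1 - δ) ^ (Fintype.card α - 1)) ≤ UG α {y | δ ≤ y i} := by
  classical
  have : Nonempty α := ⟨i⟩
  have hmono := measure_mono (μ := μH[(Fintype.card α : ℝ) - 1])
    (homothety_image_simplexG_subset i hδ0 hδ1.le)
  have hdim : (Fintype.card α : ℝ) - 1 = (Fintype.card α - 1 : ℕ) := by
    rw [Nat.cast_sub Fintype.card_pos, Nat.cast_one]
  rw [hausdorffMeasure_homothety_image (by rw [hdim]; positivity) _ (sub_pos.2 hδ1).ne',
    ENNReal.smul_def, smul_eq_mul] at hmono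
  have hratio : ((‖1 - δ‖₊ ^ ((Fintype.card α : ℝ) - 1) : NNReal) : ℝ≥0∞)
      = ENNReal.ofReal ((1 - δ) ^ (Fintype.card α - 1)) := by
    rw [← ENNReal.ofReal_coe_nnreal, NNReal.coe_rpow, coe_nnnorm,
      Real.norm_of_nonneg (sub_pos.2 hδ1).le, hdim, Real.rpow_natCast]
  rw [UG, Measure.smul_apply, Measure.restrict_apply
    (measurableSet_le measurable_const (measurable_pi_apply i)), smul_eq_mul, mul_comm,
    ← div_eq_mul_inv, ENNReal.le_div_iff_mul_le (.inl hausdorffMeasure_simplexG_ne_zero)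
    (.inl hausdorffMeasure_simplexG_ne_top), ← hratio]
  exact hmono

lemma UG_lt_le (i : α) {δ : ℝ} (hδ : 0 ≤ δ) :
    UG α {y | y i < δ} ≤ ENNReal.ofReal (Fintype.card α * δ) := by
  have : Nonempty α := ⟨i⟩
  have := isProbabilityMeasure_UG (α := α)
  have hcard : (1 : ℝ) ≤ Fintype.card α := by exact_mod_cast Fintype.card_pos
  rcases le_or_gt 1 δ with hδ1 | hδ1
  · exact prob_le_one.trans (ENNReal.one_le_ofReal.2 (one_le_mul_of_one_le_of_one_le hcard hδ1))
  have hbernoulli : 1 - Fintype.card α * δ ≤ (1 - δ) ^ (Fintype.card α - 1) := by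
    have := one_add_mul_le_pow (a := -δ) (by linarith) (Fintype.card α - 1)
    rw [Nat.cast_sub Fintype.card_pos, ← sub_eq_add_neg] at this
    push_cast at this
    linarith
  have hcompl : {y : α → ℝ | y i < δ} = {y | δ ≤ y i}ᶜ := by
    ext y
    simp
  rw [hcompl, prob_compl_eq_one_sub (measurableSet_le measurable_const (measurable_pi_apply i)),
    tsub_le_iff_right]
  calc (1 : ℝ≥0∞) = ENNReal.ofReal (Fintype.card α * δ + (1 - Fintype.card α * δ)) := by simp
    _ ≤ ENNReal.ofReal (Fintype.card α * δ) + ENNReal.ofReal (1 - Fintype.card α * δ) :=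
      ENNReal.ofReal_add_le
    _ ≤ ENNReal.ofReal (Fintype.card α * δ) + UG α {y | δ ≤ y i} := by
      gcongr
      exact (ENNReal.ofReal_le_ofReal hbernoulli).trans (ofReal_pow_le_UG i hδ hδ1)

end UniformLaw

section SpectralGap

lemma isCompact_sum_eq_zero_sum_sq_eq_one {α : Type*} [Fintype α] :
    IsCompact {v : α → ℝ | ∑ g, v g = 0 ∧ ∑ g, v g ^ 2 = 1} := by
  refine Metric.isCompact_of_isClosed_isBounded ?_
    ((Metric.isBounded_closedBall (x := (0 : α → ℝ)) (r := 1)).subset ?_)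
  · exact (isClosed_eq (by fun_prop) continuous_const).inter
      (isClosed_eq (by fun_prop) continuous_const)
  · rintro v ⟨-, hv⟩
    rw [mem_closedBall_zero_iff, pi_norm_le_iff_of_nonneg zero_le_one]
    intro g
    rw [Real.norm_eq_abs, ← sq_le_one_iff_abs_le_one, ← hv]
    exact Finset.single_le_sum (f := fun g => v g ^ 2) (fun _ _ => sq_nonneg _) (Finset.mem_univ g)

variable {Γ : Type*} [Group Γ]

lemma eq_apply_one_of_mul_right_invariant {β : Type*} {s : Set Γ} (hs : Subgroup.closure s = ⊤)
    {f : Γ → β} (hf : ∀ r ∈ s, ∀ g, f (g * r) = f g) (g : Γ) : f g = f 1 := by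
  have hall : ∀ k g, f (g * k) = f g := by
    intro k
    have hk : k ∈ Subgroup.closure s := hs ▸ Subgroup.mem_top k
    induction hk using Subgroup.closure_induction with
    | mem r hr => exact hf r hr
    | one => simp
    | mul x y _ _ hx hy => intro g; rw [← mul_assoc, hy, hx]
    | inv x _ hx => intro g; rw [← hx (g * x⁻¹), inv_mul_cancel_right]
  simpa using hall g 1

variable [Fintype Γ]

/-- The Dirichlet form of the random walk with steps in `R`, normalized so that it is the
quadratic form of `1 - K̂`. -/
def dirichletForm (R : Finset Γ) (v : Γ → ℝ) : ℝ := 𝔼 g, 𝔼 r ∈ R, (v (g * r) - v g) ^ 2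

lemma dirichletForm_nonneg (R : Finset Γ) (v : Γ → ℝ) : 0 ≤ dirichletForm R v :=
  Finset.expect_nonneg fun _ _ => Finset.expect_nonneg fun _ _ => sq_nonneg _

lemma dirichletForm_smul (R : Finset Γ) (c : ℝ) (v : Γ → ℝ) :
    dirichletForm R (c • v) = c ^ 2 * dirichletForm R v := by
  simp only [dirichletForm, Pi.smul_apply, smul_eq_mul, ← mul_sub, mul_pow, Finset.mul_expect]

lemma expect_expect_mul_right {R : Finset Γ} (hR : R.Nonempty) (f : Γ → ℝ) :
    𝔼 g, 𝔼 r ∈ R, f (g * r) = 𝔼 g, f g := by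
  rw [Finset.expect_comm]
  simp only [fun r => Fintype.expect_equiv (Equiv.mulRight r) (fun g => f (g * r)) f fun _ => rfl]
  exact Finset.expect_const hR _

lemma dirichletForm_eq {R : Finset Γ} (hR : R.Nonempty) (v : Γ → ℝ) :
    dirichletForm R v = 2 * 𝔼 g, v g ^ 2 - 2 * 𝔼 g, v g * 𝔼 r ∈ R, v (g * r) := by
  have hexpand : ∀ g r, (v (g * r) - v g) ^ 2
      = v (g * r) ^ 2 + v g ^ 2 - 2 * (v g * v (g * r)) := fun g r => by ring
  simp only [dirichletForm, hexpand, Finset.expect_sub_distrib, Finset.expect_add_distrib,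
    expect_expect_mul_right hR fun g => v g ^ 2, Finset.expect_const hR, ← Finset.mul_expect]
  ring

lemma dirichletForm_le {R : Finset Γ} (hR : R.Nonempty) (v : Γ → ℝ) :
    dirichletForm R v ≤ 4 * 𝔼 g, v g ^ 2 := by
  calc dirichletForm R v
      ≤ 𝔼 g, 𝔼 r ∈ R, (2 * v (g * r) ^ 2 + 2 * v g ^ 2) :=
        Finset.expect_le_expect fun g _ => Finset.expect_le_expect fun r _ => by
          nlinarith [sq_nonneg (v (g * r) + v g)]
    _ = 4 * 𝔼 g, v g ^ 2 := by
        simp only [Finset.expect_add_distrib, ← Finset.mul_expect, Finset.expect_const hR,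
          expect_expect_mul_right hR fun g => v g ^ 2]
        ring

lemma apply_mul_eq_of_dirichletForm_eq_zero {R : Finset Γ} {v : Γ → ℝ}
    (h : dirichletForm R v = 0) : ∀ r ∈ R, ∀ g, v (g * r) = v g := by
  intro r hr g
  have hg := (Finset.expect_eq_zero_iff_of_nonneg fun g _ =>
    Finset.expect_nonneg fun r _ => sq_nonneg (v (g * r) - v g)).1 h g (Finset.mem_univ g)
  have hgr := (Finset.expect_eq_zero_iff_of_nonneg fun r _ =>
    sq_nonneg (v (g * r) - v g)).1 hg r hr
  exact sub_eq_zero.1 (pow_eq_zero_iff two_ne_zero |>.1 hgr)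

variable [DecidableEq Γ] {R : Finset Γ}

lemma sum_KhatM_mul (hid : (1 : Γ) ∉ R) (v : Γ → ℝ) (g : Γ) :
    ∑ h, KhatM Γ R g h * v h
      = (1 - 2 / Fintype.card Γ) * v g + 2 / Fintype.card Γ * 𝔼 r ∈ R, v (g * r) := by
  have hentry : ∀ k, KhatM Γ R g (g * k) * v (g * k)
      = (if k = 1 then (1 - 2 / (Fintype.card Γ : ℝ)) * v g else 0)
        + (if k ∈ R then 2 / ((Fintype.card Γ : ℝ) * R.card) * v (g * k) else 0) := by
    intro k
    by_cases hk : k = 1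
    · simp [KhatM, hk, hid]
    · by_cases hkR : k ∈ R <;> simp [KhatM, hk, hkR]
  rw [← Equiv.sum_comp (Equiv.mulLeft g), Finset.expect_eq_sum_div_card]
  simp only [Equiv.coe_mulLeft, hentry, Finset.sum_add_distrib, Finset.sum_ite_eq',
    Finset.sum_ite_mem, Finset.univ_inter, Finset.mem_univ, if_true, ← Finset.mul_sum]
  ring

lemma sum_mul_KhatM_mul (hid : (1 : Γ) ∉ R) (hne : R.Nonempty) (v : Γ → ℝ) :
    ∑ g, ∑ h, v g * KhatM Γ R g h * v h = ∑ g, v g ^ 2 - dirichletForm R v := by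
  have hrow : ∀ g, ∑ h, v g * KhatM Γ R g h * v h
      = v g ^ 2 - 2 / Fintype.card Γ * v g ^ 2
        + 2 / Fintype.card Γ * (v g * 𝔼 r ∈ R, v (g * r)) := by
    intro g
    simp only [mul_assoc, ← Finset.mul_sum, sum_KhatM_mul hid]
    ring
  simp only [hrow, dirichletForm_eq hne, Fintype.expect_eq_sum_div_card, Finset.sum_add_distrib,
    Finset.sum_sub_distrib, ← Finset.mul_sum]
  ring

lemma gapHat_mul_sum_sq_le (hid : (1 : Γ) ∉ R) (hne : R.Nonempty) {v : Γ → ℝ}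
    (hv : ∑ g, v g = 0) : gapHat Γ R * ∑ g, v g ^ 2 ≤ dirichletForm R v := by
  rcases (Finset.sum_nonneg fun g _ => sq_nonneg (v g) : 0 ≤ ∑ g, v g ^ 2).eq_or_lt with h0 | hpos
  · rw [← h0, mul_zero]
    exact dirichletForm_nonneg R v
  set s := ∑ g, v g ^ 2 with hs
  have hnorm : (√s)⁻¹ ^ 2 * s = 1 := by
    rw [inv_pow, Real.sq_sqrt hpos.le, inv_mul_cancel₀ hpos.ne']
  have hbdd : BddAbove {lam : ℝ | ∃ u : Γ → ℝ, ∑ g, u g = 0 ∧ ∑ g, (u g) ^ 2 = 1 ∧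
      lam = ∑ g, ∑ h, u g * KhatM Γ R g h * u h} := by
    refine ⟨1, ?_⟩
    rintro _ ⟨u, -, hu, rfl⟩
    rw [sum_mul_KhatM_mul hid hne, hu]
    exact sub_le_self _ (dirichletForm_nonneg R u)
  have hle := le_csSup hbdd ⟨(√s)⁻¹ • v, by simp [← Finset.mul_sum, hv],
    by simp only [Pi.smul_apply, smul_eq_mul, mul_pow, ← Finset.mul_sum]; exact hnorm, rfl⟩
  rw [sum_mul_KhatM_mul hid hne, dirichletForm_smul] at hle
  simp only [Pi.smul_apply, smul_eq_mul, mul_pow, ← Finset.mul_sum, ← hs, hnorm] at hle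
  have hgap : gapHat Γ R ≤ (√s)⁻¹ ^ 2 * dirichletForm R v := by
    unfold gapHat
    linarith
  calc gapHat Γ R * s ≤ (√s)⁻¹ ^ 2 * dirichletForm R v * s := by gcongr
    _ = dirichletForm R v := by rw [mul_right_comm, hnorm, one_mul]

lemma gapHat_pos (hid : (1 : Γ) ∉ R) (hne : R.Nonempty)
    (hgen : Subgroup.closure (R : Set Γ) = ⊤) : 0 < gapHat Γ R := by
  set S : Set (Γ → ℝ) := {v | ∑ g, v g = 0 ∧ ∑ g, v g ^ 2 = 1} with hS
  have himage : {lam : ℝ | ∃ v : Γ → ℝ, ∑ g, v g = 0 ∧ ∑ g, (v g) ^ 2 = 1 ∧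
      lam = ∑ g, ∑ h, v g * KhatM Γ R g h * v h}
      = (fun v : Γ → ℝ => ∑ g, ∑ h, v g * KhatM Γ R g h * v h) '' S := by
    ext lam
    simp only [hS, Set.mem_image, Set.mem_ofPred_eq, and_assoc, eq_comm]
  rw [gapHat, himage]
  rcases S.eq_empty_or_nonempty with hempty | hnonempty
  · simp [hempty]
  obtain ⟨v, ⟨hsum, hsq⟩, hv⟩ := (isCompact_sum_eq_zero_sum_sq_eq_one.image
    (f := fun v : Γ → ℝ => ∑ g, ∑ h, v g * KhatM Γ R g h * v h) (by fun_prop)).sSup_mem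
    (hnonempty.image _)
  beta_reduce at hv
  rw [← hv, sum_mul_KhatM_mul hid hne, hsq, sub_sub_cancel]
  refine (dirichletForm_nonneg R v).lt_of_ne' fun hzero => ?_
  have hconst := eq_apply_one_of_mul_right_invariant hgen
    (apply_mul_eq_of_dirichletForm_eq_zero hzero)
  simp only [hconst, Finset.sum_const, Finset.card_univ, nsmul_eq_mul, mul_eq_zero,
    Nat.cast_eq_zero, Fintype.card_ne_zero, false_or] at hsum
  simp [hconst, hsum] at hsq

lemma gapHat_le (hid : (1 : Γ) ∉ R) (hne : R.Nonempty) : gapHat Γ R ≤ 4 / Fintype.card Γ := by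
  obtain ⟨r, hr⟩ := hne
  have hr1 : r ≠ 1 := ne_of_mem_of_not_mem hr hid
  set v : Γ → ℝ := Pi.single 1 1 - Pi.single r 1 with hv
  have hpos : 0 < ∑ g, v g ^ 2 :=
    Finset.sum_pos' (fun _ _ => sq_nonneg _) ⟨1, Finset.mem_univ _, by simp [hv, hr1.symm]⟩
  refine le_of_mul_le_mul_right ?_ hpos
  calc gapHat Γ R * ∑ g, v g ^ 2
      ≤ dirichletForm R v := gapHat_mul_sum_sq_le hid ⟨r, hr⟩ (by simp [hv])
    _ ≤ 4 * 𝔼 g, v g ^ 2 := dirichletForm_le ⟨r, hr⟩ v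
    _ = 4 / Fintype.card Γ * ∑ g, v g ^ 2 := by rw [Fintype.expect_eq_sum_div_card]; ring

lemma gapHat_le_two (hid : (1 : Γ) ∉ R) (hne : R.Nonempty) : gapHat Γ R ≤ 2 := by
  obtain ⟨r, hr⟩ := hne
  have hcard : 1 < Fintype.card Γ :=
    Fintype.one_lt_card_iff.2 ⟨r, 1, ne_of_mem_of_not_mem hr hid⟩
  have hcard2 : (2 : ℝ) ≤ Fintype.card Γ := mod_cast hcard
  refine (gapHat_le hid ⟨r, hr⟩).trans ?_
  rw [div_le_iff₀ (by positivity)]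
  linarith

end SpectralGap

section QuadraticForms

open scoped Matrix

lemma quadraticForm_add_smul {ι : Type*} [Fintype ι] {A : Matrix ι ι ℝ} (hA : A.IsSymm)
    (v u : ι → ℝ) (s : ℝ) :
    (v + s • u) ⬝ᵥ A *ᵥ (v + s • u)
      = v ⬝ᵥ A *ᵥ v + 2 * s * (u ⬝ᵥ A *ᵥ v) + s ^ 2 * (u ⬝ᵥ A *ᵥ u) := by
  have hswap : v ⬝ᵥ A *ᵥ u = u ⬝ᵥ A *ᵥ v := by
    rw [← Matrix.dotProduct_transpose_mulVec, hA.eq]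
  simp only [Matrix.mulVec_add, Matrix.mulVec_smul, add_dotProduct, dotProduct_add,
    smul_dotProduct, dotProduct_smul, smul_eq_mul, hswap]
  ring

variable {α : Type*} [DecidableEq α]

lemma resample_eq_add {p q : α} (hpq : p ≠ q) (l : ℝ) (v : α → ℝ) :
    resample p q l v
      = v + (l * (v p + v q) - v p) • (Pi.single p 1 - Pi.single q 1 : α → ℝ) := by
  funext g
  rcases eq_or_ne g p with rfl | hp
  · simp [resample, hpq]
  rcases eq_or_ne g q with rfl | hq
  · simp [resample, redistribute_right hpq, hp]
    ring
  · simp [resample, redistribute_of_ne hp hq, hp, hq]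

lemma integral_uniform01_quadratic (a b c : ℝ) :
    ∫ l, (a + b * l + c * l ^ 2) ∂uniform01 = a + b / 2 + c / 3 := by
  rw [integral_Icc_eq_integral_Ioc, ← intervalIntegral.integral_of_le zero_le_one,
    intervalIntegral.integral_add (Continuous.intervalIntegrable (by fun_prop) _ _)
      (Continuous.intervalIntegrable (by fun_prop) _ _),
    intervalIntegral.integral_add (Continuous.intervalIntegrable (by fun_prop) _ _)
      (Continuous.intervalIntegrable (by fun_prop) _ _)]
  simp only [intervalIntegral.integral_const, intervalIntegral.integral_const_mul, integral_pow]
  rw [intervalIntegral.integral_const_mul, integral_id]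
  norm_num
  ring

lemma integral_quadraticForm_resample [Fintype α] {A : Matrix α α ℝ} (hA : A.IsSymm)
    {p q : α} (hpq : p ≠ q) (v : α → ℝ) :
    ∫ l, (resample p q l v) ⬝ᵥ A *ᵥ (resample p q l v) ∂uniform01
      = v ⬝ᵥ A *ᵥ v + (v q - v p) * ((A *ᵥ v) p - (A *ᵥ v) q)
        + (v p ^ 2 - v p * v q + v q ^ 2) / 3 * (A p p - 2 * A p q + A q q) := by
  set u : α → ℝ := Pi.single p 1 - Pi.single q 1 with hu
  have huAv : u ⬝ᵥ A *ᵥ v = (A *ᵥ v) p - (A *ᵥ v) q := by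
    rw [hu, sub_dotProduct, single_one_dotProduct, single_one_dotProduct]
  have huAu : u ⬝ᵥ A *ᵥ u = A p p - 2 * A p q + A q q := by
    simp only [hu, sub_dotProduct, single_one_dotProduct, Matrix.mulVec_sub, Pi.sub_apply,
      Matrix.mulVec_single_one, Matrix.col_apply, hA.apply p q]
    ring
  have hpoly : ∀ l, (resample p q l v) ⬝ᵥ A *ᵥ (resample p q l v)
      = (v ⬝ᵥ A *ᵥ v - 2 * v p * (u ⬝ᵥ A *ᵥ v) + v p ^ 2 * (u ⬝ᵥ A *ᵥ u))
        + (2 * (v p + v q) * (u ⬝ᵥ A *ᵥ v) - 2 * (v p + v q) * v p * (u ⬝ᵥ A *ᵥ u)) * l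
        + (v p + v q) ^ 2 * (u ⬝ᵥ A *ᵥ u) * l ^ 2 := by
    intro l
    rw [resample_eq_add hpq, quadraticForm_add_smul hA]
    ring
  simp only [hpoly, integral_uniform01_quadratic, huAv, huAu]
  ring

end QuadraticForms

section EdgeSums

variable {Γ : Type*} [Group Γ] {R : Finset Γ}

lemma expect_inv (hsym : ∀ r ∈ R, r⁻¹ ∈ R) (f : Γ → ℝ) : 𝔼 r ∈ R, f r⁻¹ = 𝔼 r ∈ R, f r :=
  Finset.expect_nbij' (·⁻¹) (·⁻¹) hsym hsym (by simp) (by simp) (by simp)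

variable [Fintype Γ]

lemma expect_sum_mul_left (hsym : ∀ r ∈ R, r⁻¹ ∈ R) (F : Γ → Γ → ℝ) :
    𝔼 r ∈ R, ∑ k, F (r * k) k = 𝔼 r ∈ R, ∑ k, F k (r * k) := by
  rw [← expect_inv hsym]
  refine Finset.expect_congr rfl fun r _ => ?_
  rw [← Equiv.sum_comp (Equiv.mulLeft r)]
  simp

lemma expect_sum_mul_right (hsym : ∀ r ∈ R, r⁻¹ ∈ R) {F : Γ → Γ → ℝ}
    (hF : ∀ k l, F k⁻¹ l⁻¹ = F k l) :
    𝔼 r ∈ R, ∑ k, F k (k * r) = 𝔼 r ∈ R, ∑ k, F k (r * k) := by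
  rw [← expect_inv hsym]
  refine Finset.expect_congr rfl fun r _ => ?_
  rw [← Equiv.sum_comp (Equiv.inv Γ)]
  refine Finset.sum_congr rfl fun k _ => ?_
  rw [Equiv.inv_apply, ← mul_inv_rev, hF]

end EdgeSums

section Differences

variable {Γ : Type*} [DecidableEq Γ]

/-- Conductances of the walk on `Γ` that governs the spatial autocorrelation of the difference of
two coupled chains. -/
def conductance [One Γ] (k l : Γ) : ℝ := if k = 1 ∨ l = 1 then 2 / 3 else 1

/-- Reversible weights of the walk that governs the spatial autocorrelation of the difference of
two coupled chains. -/
def vertexWeight [One Γ] (k : Γ) : ℝ := if k = 1 then 2 else 1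

lemma conductance_comm [One Γ] (k l : Γ) : conductance k l = conductance l k := by
  simp [conductance, or_comm]

lemma conductance_le_one [One Γ] (k l : Γ) : conductance k l ≤ 1 := by
  unfold conductance; split_ifs <;> norm_num

lemma two_thirds_le_conductance [One Γ] (k l : Γ) : 2 / 3 ≤ conductance k l := by
  unfold conductance; split_ifs <;> norm_num

lemma one_le_vertexWeight [One Γ] (k : Γ) : 1 ≤ vertexWeight k := by
  unfold vertexWeight; split_ifs <;> norm_num

lemma vertexWeight_le_two [One Γ] (k : Γ) : vertexWeight k ≤ 2 := by
  unfold vertexWeight; split_ifs <;> norm_num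

variable [Group Γ]

lemma conductance_inv (k l : Γ) : conductance k⁻¹ l⁻¹ = conductance k l := by simp [conductance]

lemma vertexWeight_inv (k : Γ) : vertexWeight k⁻¹ = vertexWeight k := by simp [vertexWeight]

/-- The Laplacian of the walk by left and right multiplication with elements of `R`, weighted by
`conductance`. -/
def laplacian (R : Finset Γ) (a : Γ → ℝ) (k : Γ) : ℝ :=
  𝔼 r ∈ R, (conductance k (k * r) * (a (k * r) - a k) + conductance k (r * k) * (a (r * k) - a k))

/-- The energy form of `laplacian`. On inversion-invariant functions left and right multiplications
contribute equally, so only the left ones appear. -/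
def edgeEnergy [Fintype Γ] (R : Finset Γ) (a f : Γ → ℝ) : ℝ :=
  𝔼 r ∈ R, ∑ k, conductance k (r * k) * ((a (r * k) - a k) * (f (r * k) - f k))

/-- The transition operator of the walk that governs the autocorrelation of the difference of two
coupled chains: see `expect_integral_autocorrelationForm_resample`. -/
def differenceStep [Fintype Γ] (R : Finset Γ) (a : Γ → ℝ) (k : Γ) : ℝ :=
  a k + laplacian R a k / (Fintype.card Γ * vertexWeight k)

variable {R : Finset Γ} {a : Γ → ℝ}

lemma laplacian_inv (hsym : ∀ r ∈ R, r⁻¹ ∈ R) (ha : ∀ k, a k⁻¹ = a k) (k : Γ) :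
    laplacian R a k⁻¹ = laplacian R a k := by
  unfold laplacian
  rw [← expect_inv hsym]
  refine Finset.expect_congr rfl fun r _ => ?_
  rw [← mul_inv_rev, ← mul_inv_rev, conductance_inv, conductance_inv, ha, ha, ha, add_comm]

variable [Fintype Γ]

lemma differenceStep_inv (hsym : ∀ r ∈ R, r⁻¹ ∈ R) (ha : ∀ k, a k⁻¹ = a k) (k : Γ) :
    differenceStep R a k⁻¹ = differenceStep R a k := by
  unfold differenceStep
  rw [ha, vertexWeight_inv, laplacian_inv hsym ha]

lemma vertexWeight_mul_differenceStep (a : Γ → ℝ) (k : Γ) :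
    vertexWeight k * differenceStep R a k
      = vertexWeight k * a k + laplacian R a k / Fintype.card Γ := by
  have hw : vertexWeight k ≠ 0 := (zero_lt_one.trans_le (one_le_vertexWeight k)).ne'
  unfold differenceStep
  field_simp

lemma sum_mul_laplacian (hsym : ∀ r ∈ R, r⁻¹ ∈ R) (ha : ∀ k, a k⁻¹ = a k) {f : Γ → ℝ}
    (hf : ∀ k, f k⁻¹ = f k) : ∑ k, f k * laplacian R a k = -edgeEnergy R a f := by
  set F : Γ → Γ → ℝ := fun k l => f k * (conductance k l * (a l - a k)) with hF
  calc ∑ k, f k * laplacian R a k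
      = 𝔼 r ∈ R, ∑ k, F k (k * r) + 𝔼 r ∈ R, ∑ k, F k (r * k) := by
        simp only [hF, laplacian, Finset.mul_expect, mul_add, Finset.expect_add_distrib,
          Finset.sum_add_distrib, Finset.expect_sum_comm]
    _ = 𝔼 r ∈ R, ∑ k, F (r * k) k + 𝔼 r ∈ R, ∑ k, F k (r * k) := by
        rw [expect_sum_mul_right hsym fun k l => by simp only [hF, conductance_inv, ha, hf],
          expect_sum_mul_left hsym]
    _ = -edgeEnergy R a f := by
        rw [edgeEnergy, ← Finset.expect_add_distrib, ← Finset.expect_neg_distrib]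
        refine Finset.expect_congr rfl fun r _ => ?_
        rw [← Finset.sum_add_distrib, ← Finset.sum_neg_distrib]
        refine Finset.sum_congr rfl fun k _ => ?_
        simp only [hF, conductance_comm (r * k) k]
        ring

lemma card_mul_dirichletForm_le_edgeEnergy (hsym : ∀ r ∈ R, r⁻¹ ∈ R) (ha : ∀ k, a k⁻¹ = a k) :
    2 / 3 * (Fintype.card Γ * dirichletForm R a) ≤ edgeEnergy R a a := by
  calc 2 / 3 * (Fintype.card Γ * dirichletForm R a)
      = 𝔼 r ∈ R, ∑ k, 2 / 3 * (a (r * k) - a k) ^ 2 := by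
        rw [dirichletForm, Fintype.card_mul_expect, ← Finset.expect_sum_comm,
          expect_sum_mul_right hsym (F := fun k l => (a l - a k) ^ 2) fun k l => by simp only [ha]]
        simp only [Finset.mul_expect, Finset.mul_sum]
    _ ≤ edgeEnergy R a a := by
        refine Finset.expect_le_expect fun r _ => Finset.sum_le_sum fun k _ => ?_
        rw [← sq]
        gcongr
        exact two_thirds_le_conductance _ _

lemma sum_laplacian_sq_le (hne : R.Nonempty) (hsym : ∀ r ∈ R, r⁻¹ ∈ R) (ha : ∀ k, a k⁻¹ = a k) :
    ∑ k, laplacian R a k ^ 2 ≤ 4 * edgeEnergy R a a := by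
  set F : Γ → Γ → ℝ := fun k l => conductance k l * (a l - a k) ^ 2 with hF
  have hjensen : ∀ k, laplacian R a k ^ 2 ≤ 𝔼 r ∈ R, (2 * F k (k * r) + 2 * F k (r * k)) := by
    intro k
    have hsq : ∀ l, (conductance k l * (a l - a k)) ^ 2 ≤ F k l := fun l => by
      have hlow := two_thirds_le_conductance k l
      have hc : conductance k l ^ 2 ≤ conductance k l := by nlinarith [conductance_le_one k l]
      rw [mul_pow]
      exact mul_le_mul_of_nonneg_right hc (sq_nonneg _)
    have hcauchy := Finset.expect_mul_sq_le_sq_mul_sq R (fun _ => (1 : ℝ)) fun r =>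
      conductance k (k * r) * (a (k * r) - a k) + conductance k (r * k) * (a (r * k) - a k)
    simp only [one_mul, one_pow, Finset.expect_const hne] at hcauchy
    refine hcauchy.trans (Finset.expect_le_expect fun r _ => (add_sq_le.trans ?_))
    linarith [hsq (k * r), hsq (r * k)]
  calc ∑ k, laplacian R a k ^ 2
      ≤ ∑ k, 𝔼 r ∈ R, (2 * F k (k * r) + 2 * F k (r * k)) := Finset.sum_le_sum fun k _ => hjensen k
    _ = 2 * 𝔼 r ∈ R, ∑ k, F k (k * r) + 2 * 𝔼 r ∈ R, ∑ k, F k (r * k) := by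
        simp only [Finset.expect_add_distrib, Finset.sum_add_distrib, ← Finset.mul_expect,
          ← Finset.mul_sum, Finset.expect_sum_comm]
    _ = 4 * edgeEnergy R a a := by
        rw [expect_sum_mul_right hsym fun k l => by simp only [hF, conductance_inv, ha]]
        simp only [edgeEnergy, hF, sq]
        ring

end Differences

section Contraction

variable {Γ : Type*} [Group Γ] [Fintype Γ] [DecidableEq Γ] {R : Finset Γ} {a : Γ → ℝ}

lemma sum_vertexWeight_mul_differenceStep (hsym : ∀ r ∈ R, r⁻¹ ∈ R) (ha : ∀ k, a k⁻¹ = a k) :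
    ∑ k, vertexWeight k * differenceStep R a k = ∑ k, vertexWeight k * a k := by
  have hflux : ∑ k, laplacian R a k = 0 := by
    have := sum_mul_laplacian hsym ha (f := fun _ => 1) fun _ => rfl
    simpa [edgeEnergy] using this
  simp only [vertexWeight_mul_differenceStep, Finset.sum_add_distrib, ← Finset.sum_div, hflux,
    zero_div, add_zero]

lemma sum_vertexWeight_mul_sq_le (hm : ∑ k, vertexWeight k * a k = 0) (b : ℝ) :
    ∑ k, vertexWeight k * a k ^ 2 ≤ 2 * ∑ k, (a k - b) ^ 2 := by
  have hexpand : ∑ k, vertexWeight k * (a k - b) ^ 2 = ∑ k, vertexWeight k * a k ^ 2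
      - 2 * b * ∑ k, vertexWeight k * a k + b ^ 2 * ∑ k : Γ, vertexWeight k := by
    rw [Finset.mul_sum, Finset.mul_sum, ← Finset.sum_sub_distrib, ← Finset.sum_add_distrib]
    exact Finset.sum_congr rfl fun k _ => by ring
  have hweight : 0 ≤ ∑ k : Γ, vertexWeight k :=
    Finset.sum_nonneg fun k _ => zero_le_one.trans (one_le_vertexWeight k)
  calc ∑ k, vertexWeight k * a k ^ 2
      ≤ ∑ k, vertexWeight k * (a k - b) ^ 2 := by
        rw [hexpand, hm]
        nlinarith [mul_nonneg (sq_nonneg b) hweight]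
    _ ≤ 2 * ∑ k, (a k - b) ^ 2 := by
        rw [Finset.mul_sum]
        gcongr with k
        exact vertexWeight_le_two k

lemma gapHat_mul_le_edgeEnergy (hsym : ∀ r ∈ R, r⁻¹ ∈ R) (hid : (1 : Γ) ∉ R) (hne : R.Nonempty)
    (hγ : 0 ≤ gapHat Γ R) (ha : ∀ k, a k⁻¹ = a k) (hm : ∑ k, vertexWeight k * a k = 0) :
    gapHat Γ R / 3 * ∑ k, vertexWeight k * a k ^ 2 ≤ edgeEnergy R a a / Fintype.card Γ := by
  have hn : (0 : ℝ) < Fintype.card Γ := by positivity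
  set b := 𝔼 k, a k with hb
  have hcentered : ∑ k, (a k - b) = 0 := by
    rw [Finset.sum_sub_distrib, Finset.sum_const, Finset.card_univ, hb, Fintype.card_smul_expect,
      sub_self]
  have hshift : dirichletForm R (fun k => a k - b) = dirichletForm R a := by
    simp only [dirichletForm, sub_sub_sub_cancel_right]
  calc gapHat Γ R / 3 * ∑ k, vertexWeight k * a k ^ 2
      ≤ gapHat Γ R / 3 * (2 * ∑ k, (a k - b) ^ 2) := by
        gcongr
        exact sum_vertexWeight_mul_sq_le hm b
    _ = 2 / 3 * (gapHat Γ R * ∑ k, (a k - b) ^ 2) := by ring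
    _ ≤ 2 / 3 * dirichletForm R a := by
        rw [← hshift]
        gcongr
        exact gapHat_mul_sum_sq_le hid hne hcentered
    _ ≤ edgeEnergy R a a / Fintype.card Γ := by
        rw [le_div_iff₀ hn]
        linarith [card_mul_dirichletForm_le_edgeEnergy hsym ha]

lemma sum_vertexWeight_mul_differenceStep_sq_le (hsym : ∀ r ∈ R, r⁻¹ ∈ R) (hid : (1 : Γ) ∉ R)
    (hne : R.Nonempty) (hcard : 4 ≤ Fintype.card Γ) (hγ : 0 ≤ gapHat Γ R)
    (ha : ∀ k, a k⁻¹ = a k) (hm : ∑ k, vertexWeight k * a k = 0) :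
    ∑ k, vertexWeight k * differenceStep R a k ^ 2
      ≤ (1 - gapHat Γ R / 3) * ∑ k, vertexWeight k * a k ^ 2 := by
  have hn : (4 : ℝ) ≤ Fintype.card Γ := mod_cast hcard
  set n := (Fintype.card Γ : ℝ)
  have hterm : ∀ k, vertexWeight k * differenceStep R a k ^ 2
      ≤ vertexWeight k * a k ^ 2 + 2 / n * (a k * laplacian R a k)
        + (laplacian R a k / n) ^ 2 := by
    intro k
    have hw := one_le_vertexWeight k
    have hw0 : vertexWeight k ≠ 0 := (zero_lt_one.trans_le hw).ne'
    have hexpand : vertexWeight k * differenceStep R a k ^ 2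
        = vertexWeight k * a k ^ 2 + 2 / n * (a k * laplacian R a k)
          + (laplacian R a k / n) ^ 2 / vertexWeight k := by
      unfold differenceStep
      field_simp
      ring
    rw [hexpand]
    gcongr
    exact div_le_self (sq_nonneg _) hw
  have henergy : 0 ≤ edgeEnergy R a a :=
    (card_mul_dirichletForm_le_edgeEnergy hsym ha).trans'
      (by have := dirichletForm_nonneg R a; positivity)
  have hlaplacian : (∑ k, laplacian R a k ^ 2) / n ^ 2 ≤ edgeEnergy R a a / n := by
    rw [div_le_div_iff₀ (by positivity) (by positivity)]
    nlinarith [sum_laplacian_sq_le hne hsym ha,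
      mul_nonneg henergy (mul_nonneg (by linarith : 0 ≤ n) (by linarith : 0 ≤ n - 4))]
  calc ∑ k, vertexWeight k * differenceStep R a k ^ 2
      ≤ ∑ k, vertexWeight k * a k ^ 2 + 2 / n * -edgeEnergy R a a
        + (∑ k, laplacian R a k ^ 2) / n ^ 2 := by
        rw [← sum_mul_laplacian hsym ha ha, Finset.mul_sum, Finset.sum_div,
          ← Finset.sum_add_distrib, ← Finset.sum_add_distrib]
        simp only [← div_pow]
        exact Finset.sum_le_sum fun k _ => hterm k
    _ ≤ ∑ k, vertexWeight k * a k ^ 2 + 2 / n * -edgeEnergy R a a + edgeEnergy R a a / n := by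
        gcongr
    _ = ∑ k, vertexWeight k * a k ^ 2 - edgeEnergy R a a / n := by ring
    _ ≤ (1 - gapHat Γ R / 3) * ∑ k, vertexWeight k * a k ^ 2 := by
        linarith [gapHat_mul_le_edgeEnergy hsym hid hne hγ ha hm]

end Contraction

section Autocorrelation

open scoped Matrix

variable {Γ : Type*} [Group Γ] [Fintype Γ]

/-- The unnormalized spatial autocorrelation of `D` at displacement `k`. -/
def autocorrelation (D : Γ → ℝ) (k : Γ) : ℝ := ∑ g, D g * D (g * k)

/-- The translation-invariant quadratic form in `D` with coefficients `a`. -/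
def autocorrelationForm (a D : Γ → ℝ) : ℝ := ∑ k, a k * autocorrelation D k

/-- The matrix of `autocorrelationForm a`. -/
def translationMatrix {Γ : Type*} [Group Γ] (a : Γ → ℝ) : Matrix Γ Γ ℝ :=
  Matrix.of fun g h => a (g⁻¹ * h)

lemma isSymm_translationMatrix {Γ : Type*} [Group Γ] {a : Γ → ℝ} (ha : ∀ k, a k⁻¹ = a k) :
    (translationMatrix a).IsSymm :=
  Matrix.IsSymm.ext fun g h => by
    rw [translationMatrix, Matrix.of_apply, Matrix.of_apply, ← ha, mul_inv_rev, inv_inv]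

lemma translationMatrix_mulVec (a D : Γ → ℝ) (g : Γ) :
    (translationMatrix a *ᵥ D) g = ∑ k, a k * D (g * k) := by
  rw [Matrix.mulVec, dotProduct, ← Equiv.sum_comp (Equiv.mulLeft g)]
  simp [translationMatrix]

lemma sum_mul_right_mul_translationMatrix_mulVec (a D : Γ → ℝ) (p q : Γ) :
    ∑ g, D (g * p) * (translationMatrix a *ᵥ D) (g * q)
      = ∑ k, a k * autocorrelation D (p⁻¹ * (q * k)) := by
  simp only [translationMatrix_mulVec, autocorrelation, Finset.mul_sum]
  rw [Finset.sum_comm]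
  refine Finset.sum_congr rfl fun k _ => ?_
  rw [← Equiv.sum_comp (Equiv.mulRight p)
    fun g => a k * (D g * D (g * (p⁻¹ * (q * k))))]
  refine Finset.sum_congr rfl fun g _ => ?_
  simp only [Equiv.coe_mulRight, mul_assoc, mul_inv_cancel_left]
  ring

lemma autocorrelationForm_eq_dotProduct (a D : Γ → ℝ) :
    autocorrelationForm a D = D ⬝ᵥ translationMatrix a *ᵥ D := by
  simpa [autocorrelationForm, dotProduct] using
    (sum_mul_right_mul_translationMatrix_mulVec a D 1 1).symm

lemma autocorrelation_inv (D : Γ → ℝ) (k : Γ) : autocorrelation D k⁻¹ = autocorrelation D k := by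
  unfold autocorrelation
  rw [← Equiv.sum_comp (Equiv.mulRight k)]
  simp [mul_comm]

lemma autocorrelation_one (D : Γ → ℝ) : autocorrelation D 1 = ∑ g, D g ^ 2 := by
  simp [autocorrelation, sq]

lemma abs_autocorrelation_le (D : Γ → ℝ) (k : Γ) : |autocorrelation D k| ≤ ∑ g, D g ^ 2 := by
  have hsq := Finset.sum_mul_sq_le_sq_mul_sq Finset.univ D fun g => D (g * k)
  have hshift : ∑ g, D (g * k) ^ 2 = ∑ g, D g ^ 2 :=
    Equiv.sum_comp (Equiv.mulRight k) fun g => D g ^ 2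
  rw [hshift, ← sq] at hsq
  exact abs_le_of_sq_le_sq hsq (by positivity)

lemma sum_autocorrelation (D : Γ → ℝ) : ∑ k, autocorrelation D k = (∑ g, D g) ^ 2 := by
  unfold autocorrelation
  rw [Finset.sum_comm, sq, Finset.sum_mul]
  refine Finset.sum_congr rfl fun g _ => ?_
  rw [← Finset.mul_sum]
  exact congrArg (D g * ·) (Equiv.sum_comp (Equiv.mulLeft g) D)

lemma sum_sub_mul_translationMatrix_mulVec_sub (a D : Γ → ℝ) (r : Γ) :
    ∑ g, (D (g * r) - D g)
        * ((translationMatrix a *ᵥ D) g - (translationMatrix a *ᵥ D) (g * r))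
      = -∑ k, (a (r * k) - a k) * (autocorrelation D (r * k) - autocorrelation D k) := by
  have hW := sum_mul_right_mul_translationMatrix_mulVec a D
  have hshift : ∀ f : Γ → ℝ, ∑ k, f (r * k) = ∑ k, f k := Equiv.sum_comp (Equiv.mulLeft r)
  have hleft := hshift fun k => a k * autocorrelation D k
  have hright := hshift fun k => a k * autocorrelation D (r⁻¹ * k)
  have h11 := hW 1 1
  have h1r := hW 1 r
  have hr1 := hW r 1
  have hrr := hW r r
  simp only [mul_one, one_mul, inv_one, inv_mul_cancel_left] at h11 h1r hr1 hrr hright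
  simp only [sub_mul, mul_sub, Finset.sum_sub_distrib, h11, h1r, hr1, hrr, hleft, hright]
  ring

variable [DecidableEq Γ]

lemma sum_conductance_mul_sub_mul_div_sub {a S : Γ → ℝ} (ha : ∀ k, a k⁻¹ = a k)
    (hS : ∀ k, S k⁻¹ = S k) {r : Γ} (hr : r ≠ 1) :
    ∑ k, conductance k (r * k) * ((a (r * k) - a k)
        * (S (r * k) / vertexWeight (r * k) - S k / vertexWeight k))
      = ∑ k, (a (r * k) - a k) * (S (r * k) - S k) - 2 / 3 * ((a 1 - a r) * (2 * S 1 - S r)) := by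
  rw [eq_sub_iff_add_eq, ← eq_sub_iff_add_eq', ← Finset.sum_sub_distrib,
    Fintype.sum_eq_add (1 : Γ) r⁻¹ (inv_ne_one.2 hr).symm]
  · simp only [conductance, vertexWeight, mul_one, mul_inv_cancel, true_or, or_true, if_true,
      if_neg hr, if_neg (inv_ne_one.2 hr), ha, hS]
    ring
  · rintro k ⟨hk1, hkr⟩
    have hrk : r * k ≠ 1 := fun h => hkr (eq_inv_of_mul_eq_one_right h)
    simp [conductance, vertexWeight, hk1, hrk]

lemma autocorrelationForm_differenceStep {R : Finset Γ} (hsym : ∀ r ∈ R, r⁻¹ ∈ R) {a : Γ → ℝ}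
    (ha : ∀ k, a k⁻¹ = a k) (D : Γ → ℝ) :
    autocorrelationForm (differenceStep R a) D = autocorrelationForm a D
      - edgeEnergy R a (fun k => autocorrelation D k / vertexWeight k) / Fintype.card Γ := by
  rw [← neg_neg (edgeEnergy _ _ _), ← sum_mul_laplacian hsym ha
    fun k => by rw [autocorrelation_inv, vertexWeight_inv], neg_div, sub_neg_eq_add, Finset.sum_div,
    autocorrelationForm, autocorrelationForm, ← Finset.sum_add_distrib]
  refine Finset.sum_congr rfl fun k _ => ?_
  unfold differenceStep
  field_simp

lemma expect_integral_autocorrelationForm_resample_edge {a : Γ → ℝ} (ha : ∀ k, a k⁻¹ = a k)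
    {r : Γ} (hr : r ≠ 1) (D : Γ → ℝ) :
    𝔼 g, ∫ l, autocorrelationForm a (resample g (g * r) l D) ∂uniform01
      = autocorrelationForm a D - (∑ k, conductance k (r * k) * ((a (r * k) - a k)
        * (autocorrelation D (r * k) / vertexWeight (r * k)
          - autocorrelation D k / vertexWeight k))) / Fintype.card Γ := by
  have hshift : ∑ g, D (g * r) ^ 2 = ∑ g, D g ^ 2 :=
    Equiv.sum_comp (Equiv.mulRight r) fun g => D g ^ 2
  have hedge : ∀ g, ∫ l, autocorrelationForm a (resample g (g * r) l D) ∂uniform01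
      = autocorrelationForm a D + (D (g * r) - D g)
          * ((translationMatrix a *ᵥ D) g - (translationMatrix a *ᵥ D) (g * r))
        + 2 / 3 * (a 1 - a r) * (D g ^ 2 - D g * D (g * r) + D (g * r) ^ 2) := by
    intro g
    have hg : g ≠ g * r := fun h => hr (mul_eq_left.1 h.symm)
    simp only [autocorrelationForm_eq_dotProduct,
      integral_quadraticForm_resample (isSymm_translationMatrix ha) hg]
    simp only [translationMatrix, Matrix.of_apply, inv_mul_cancel, inv_mul_cancel_left]
    ring
  have hsum : ∑ g, (D g ^ 2 - D g * D (g * r) + D (g * r) ^ 2)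
      = 2 * autocorrelation D 1 - autocorrelation D r := by
    rw [Finset.sum_add_distrib, Finset.sum_sub_distrib, hshift, autocorrelation_one,
      autocorrelation]
    ring
  simp only [hedge, Finset.expect_add_distrib, Fintype.expect_const]
  rw [Fintype.expect_eq_sum_div_card, Fintype.expect_eq_sum_div_card, ← Finset.mul_sum, hsum,
    sum_sub_mul_translationMatrix_mulVec_sub,
    sum_conductance_mul_sub_mul_div_sub ha (autocorrelation_inv D) hr]
  ring

theorem expect_integral_autocorrelationForm_resample {R : Finset Γ} (hsym : ∀ r ∈ R, r⁻¹ ∈ R)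
    (hid : (1 : Γ) ∉ R) (hne : R.Nonempty) {a : Γ → ℝ} (ha : ∀ k, a k⁻¹ = a k) (D : Γ → ℝ) :
    𝔼 g, 𝔼 r ∈ R, ∫ l, autocorrelationForm a (resample g (g * r) l D) ∂uniform01
      = autocorrelationForm (differenceStep R a) D := by
  rw [Finset.expect_comm, autocorrelationForm_differenceStep hsym ha, edgeEnergy,
    Finset.expect_div, ← Finset.expect_const hne (autocorrelationForm a D),
    ← Finset.expect_sub_distrib]
  refine Finset.expect_congr rfl fun r hr => ?_
  rw [expect_integral_autocorrelationForm_resample_edge ha (ne_of_mem_of_not_mem hr hid)]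

end Autocorrelation

section DifferenceKernel

variable {Γ : Type*} [Group Γ] [Fintype Γ] [DecidableEq Γ]

variable (Γ) in
/-- The point mass at `1`, centered with respect to `vertexWeight`, which has total mass
`Fintype.card Γ + 1`. -/
def centeredDelta (k : Γ) : ℝ := (if k = 1 then 1 else 0) - 2 / (Fintype.card Γ + 1)

/-- The coefficients, as a quadratic form in the initial difference, of the expected squared
distance after `t` steps of two chains driven by the same updates. -/
def differenceKernel (R : Finset Γ) (t : ℕ) : Γ → ℝ := (differenceStep R)^[t] (centeredDelta Γ)

lemma differenceKernel_succ (R : Finset Γ) (t : ℕ) :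
    differenceKernel R (t + 1) = differenceStep R (differenceKernel R t) :=
  Function.iterate_succ_apply' _ _ _

lemma sum_vertexWeight_mul_centeredDelta :
    ∑ k, vertexWeight k * centeredDelta Γ k = 0 := by
  have hweight : ∑ k : Γ, vertexWeight k = Fintype.card Γ + 1 := by
    have hsplit : ∀ k : Γ, vertexWeight k = 1 + if k = 1 then 1 else 0 := fun k => by
      unfold vertexWeight
      split_ifs <;> norm_num
    simp [hsplit, Finset.sum_add_distrib]
  simp only [centeredDelta, mul_sub, Finset.sum_sub_distrib, ← Finset.sum_mul, hweight]
  simp only [mul_ite, mul_one, mul_zero, Finset.sum_ite_eq', Finset.mem_univ, vertexWeight, if_true]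
  field_simp
  ring

lemma sum_vertexWeight_mul_centeredDelta_sq_le :
    ∑ k, vertexWeight k * centeredDelta Γ k ^ 2 ≤ 2 := by
  set b : ℝ := 2 / (Fintype.card Γ + 1)
  have hterm : ∀ k : Γ, vertexWeight k * centeredDelta Γ k ^ 2
      = (if k = 1 then 2 * (1 - b) else 0) - b * (vertexWeight k * centeredDelta Γ k) := by
    intro k
    unfold centeredDelta vertexWeight
    split_ifs <;> ring
  have hb : 0 ≤ b := by positivity
  simp only [hterm, Finset.sum_sub_distrib, ← Finset.mul_sum, sum_vertexWeight_mul_centeredDelta,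
    Finset.sum_ite_eq', Finset.mem_univ, if_true]
  linarith

variable {R : Finset Γ}

lemma differenceKernel_inv (hsym : ∀ r ∈ R, r⁻¹ ∈ R) (t : ℕ) (k : Γ) :
    differenceKernel R t k⁻¹ = differenceKernel R t k := by
  induction t generalizing k with
  | zero => simp [differenceKernel, centeredDelta]
  | succ t ih =>
    rw [differenceKernel_succ]
    exact differenceStep_inv hsym ih k

lemma sum_vertexWeight_mul_differenceKernel (hsym : ∀ r ∈ R, r⁻¹ ∈ R) (t : ℕ) :
    ∑ k, vertexWeight k * differenceKernel R t k = 0 := by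
  induction t with
  | zero => exact sum_vertexWeight_mul_centeredDelta
  | succ t ih =>
    rw [differenceKernel_succ,
      sum_vertexWeight_mul_differenceStep hsym (differenceKernel_inv hsym t), ih]

lemma sum_vertexWeight_mul_differenceKernel_sq_le (hsym : ∀ r ∈ R, r⁻¹ ∈ R) (hid : (1 : Γ) ∉ R)
    (hne : R.Nonempty) (hcard : 4 ≤ Fintype.card Γ) (hγ : 0 ≤ gapHat Γ R) (t : ℕ) :
    ∑ k, vertexWeight k * differenceKernel R t k ^ 2 ≤ (1 - gapHat Γ R / 3) ^ t * 2 := by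
  induction t with
  | zero => simpa [differenceKernel] using sum_vertexWeight_mul_centeredDelta_sq_le
  | succ t ih =>
    calc ∑ k, vertexWeight k * differenceKernel R (t + 1) k ^ 2
        ≤ (1 - gapHat Γ R / 3) * ∑ k, vertexWeight k * differenceKernel R t k ^ 2 := by
          rw [differenceKernel_succ]
          exact sum_vertexWeight_mul_differenceStep_sq_le hsym hid hne hcard hγ
            (differenceKernel_inv hsym t) (sum_vertexWeight_mul_differenceKernel hsym t)
      _ ≤ (1 - gapHat Γ R / 3) * ((1 - gapHat Γ R / 3) ^ t * 2) := by
          gcongr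
          linarith [gapHat_le_two hid hne]
      _ = (1 - gapHat Γ R / 3) ^ (t + 1) * 2 := by ring

lemma autocorrelationForm_centeredDelta {D : Γ → ℝ} (hD : ∑ g, D g = 0) :
    autocorrelationForm (centeredDelta Γ) D = ∑ g, D g ^ 2 := by
  simp only [autocorrelationForm, centeredDelta, sub_mul, Finset.sum_sub_distrib, ← Finset.mul_sum,
    sum_autocorrelation, hD]
  simp [autocorrelation_one]

lemma autocorrelationForm_differenceKernel_nonneg (hsym : ∀ r ∈ R, r⁻¹ ∈ R) (hid : (1 : Γ) ∉ R)
    (hne : R.Nonempty) (t : ℕ) {D : Γ → ℝ} (hD : ∑ g, D g = 0) :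
    0 ≤ autocorrelationForm (differenceKernel R t) D := by
  induction t generalizing D with
  | zero =>
    exact (autocorrelationForm_centeredDelta hD).symm ▸ Finset.sum_nonneg fun g _ => sq_nonneg _
  | succ t ih =>
    rw [differenceKernel_succ, ← expect_integral_autocorrelationForm_resample hsym hid hne
      (differenceKernel_inv hsym t)]
    refine Finset.expect_nonneg fun g _ => Finset.expect_nonneg fun r hr =>
      integral_nonneg fun l => ih ?_
    have hgr : g ≠ g * r := fun h => ne_of_mem_of_not_mem hr hid (mul_eq_left.1 h.symm)
    rw [sum_resample hgr (by simp), hD]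

lemma autocorrelationForm_le (a D : Γ → ℝ) : autocorrelationForm a D
    ≤ (∑ g, D g ^ 2) * √(Fintype.card Γ * ∑ k, vertexWeight k * a k ^ 2) := by
  have hterm : ∀ k, a k * autocorrelation D k ≤ |a k| * ∑ g, D g ^ 2 := fun k =>
    (le_abs_self _).trans <| (abs_mul _ _).trans_le <| by
      gcongr
      exact abs_autocorrelation_le D k
  have habs : ∑ k, |a k| ≤ √(Fintype.card Γ * ∑ k, vertexWeight k * a k ^ 2) := by
    refine Real.le_sqrt_of_sq_le (sq_sum_le_card_mul_sum_sq.trans ?_)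
    rw [Finset.card_univ]
    gcongr with k
    rw [sq_abs]
    exact le_mul_of_one_le_left (sq_nonneg _) (one_le_vertexWeight k)
  calc autocorrelationForm a D ≤ ∑ k, |a k| * ∑ g, D g ^ 2 := Finset.sum_le_sum fun k _ => hterm k
    _ = (∑ g, D g ^ 2) * ∑ k, |a k| := by rw [← Finset.sum_mul, mul_comm]
    _ ≤ _ := by gcongr

end DifferenceKernel

section ProductPaths

lemma lintegral_pi_succ {E : Type*} [MeasurableSpace E] (P : Measure E) [SigmaFinite P] {N : ℕ}
    {f : (Fin (N + 1) → E) → ℝ≥0∞} (hf : Measurable f) :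
    ∫⁻ ω, f ω ∂Measure.pi (fun _ => P)
      = ∫⁻ u, ∫⁻ ω : Fin N → E, f (Fin.cons u ω) ∂Measure.pi (fun _ => P) ∂P := by
  have hsplit := (measurePreserving_piFinSuccAbove (fun _ : Fin (N + 1) => P) 0).symm
  rw [← hsplit.lintegral_comp hf]
  refine (lintegral_prod _ (hf.comp hsplit.measurable).aemeasurable).trans ?_
  simp [MeasurableEquiv.piFinSuccAbove, Fin.insertNthEquiv]

lemma ae_pi_forall_mem_ofFn {E : Type*} [MeasurableSpace E] {P : Measure E} [SigmaFinite P]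
    {p : E → Prop} (hp : ∀ᵐ u ∂P, p u) (N : ℕ) :
    ∀ᵐ ω ∂Measure.pi (fun _ : Fin N => P), ∀ u ∈ List.ofFn ω, p u := by
  simp only [List.forall_mem_ofFn_iff]
  exact ae_all_iff.2 fun i => Measure.tendsto_eval_ae_ae.eventually hp

lemma measurable_foldl_ofFn {X E : Type*} [MeasurableSpace X] [MeasurableSpace E]
    {step : X → E → X} (hstep : Measurable fun p : X × E => step p.1 p.2) (T : ℕ) :
    Measurable fun p : X × (Fin T → E) => (List.ofFn p.2).foldl step p.1 := by
  induction T with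
  | zero => simpa using measurable_fst
  | succ T ih =>
    simp only [List.ofFn_succ, List.foldl_cons]
    refine ih.comp (f := fun p : X × (Fin (T + 1) → E) => (step p.1 (p.2 0), fun i => p.2 i.succ))
      (Measurable.prodMk ?_ (by fun_prop))
    exact hstep.comp (f := fun p : X × (Fin (T + 1) → E) => (p.1, p.2 0)) (by fun_prop)

end ProductPaths

section GibbsOperator

variable {α : Type*} [DecidableEq α]

/-- The transition operator of the Gibbs sampler whose updated edges have law `Q`. -/
def gibbsOp [MeasurableSpace α] (Q : Measure (α × α)) (φ : (α → ℝ) → ℝ≥0∞) (x : α → ℝ) : ℝ≥0∞ :=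
  ∫⁻ e, ∫⁻ l, φ (resample e.1 e.2 l x) ∂uniform01 ∂Q

lemma measurable_comp_resample {φ : (α → ℝ) → ℝ≥0∞} (hφ : Measurable φ) (a b : α) (x : α → ℝ) :
    Measurable fun l => φ (resample a b l x) :=
  hφ.comp ((measurable_resample a b).comp measurable_prodMk_left)

variable [Countable α] [MeasurableSpace α] [DiscreteMeasurableSpace α] {Q : Measure (α × α)}

lemma measurable_gibbsOp (Q : Measure (α × α)) [SFinite Q] {φ : (α → ℝ) → ℝ≥0∞}
    (hφ : Measurable φ) : Measurable (gibbsOp Q φ) := by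
  refine Measurable.lintegral_prod_left' (f := fun p : (α × α) × (α → ℝ) =>
    ∫⁻ l, φ (resample p.1.1 p.1.2 l p.2) ∂uniform01) (measurable_from_prod_countable_right ?_)
  exact fun e => (hφ.comp (measurable_resample e.1 e.2)).lintegral_prod_right'

lemma measurable_gibbsOp_iterate (Q : Measure (α × α)) [SFinite Q] {φ : (α → ℝ) → ℝ≥0∞}
    (hφ : Measurable φ) (T : ℕ) : Measurable ((gibbsOp Q)^[T] φ) := by
  induction T with
  | zero => exact hφ
  | succ T ih =>
    rw [Function.iterate_succ_apply']
    exact measurable_gibbsOp Q ih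

lemma lintegral_gibbsOp_iterate [IsProbabilityMeasure Q] (hQ : ∀ᵐ e ∂Q, e.1 ≠ e.2)
    {U : Measure (α → ℝ)} [SFinite U] (hU : ResampleInvariant U) {φ : (α → ℝ) → ℝ≥0∞}
    (hφ : Measurable φ) (T : ℕ) : ∫⁻ y, (gibbsOp Q)^[T] φ y ∂U = ∫⁻ y, φ y ∂U := by
  induction T with
  | zero => rfl
  | succ T ih =>
    have hT := measurable_gibbsOp_iterate Q hφ T
    have hmeas : Measurable fun p : (α → ℝ) × (α × α) =>
        ∫⁻ l, (gibbsOp Q)^[T] φ (resample p.2.1 p.2.2 l p.1) ∂uniform01 :=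
      measurable_from_prod_countable_left fun e =>
        (hT.comp (measurable_resample e.1 e.2)).lintegral_prod_right'
    rw [Function.iterate_succ_apply']
    calc ∫⁻ y, gibbsOp Q ((gibbsOp Q)^[T] φ) y ∂U
        = ∫⁻ e, ∫⁻ y, ∫⁻ l, (gibbsOp Q)^[T] φ (resample e.1 e.2 l y) ∂uniform01 ∂U ∂Q :=
          lintegral_lintegral_swap hmeas.aemeasurable
      _ = ∫⁻ _, ∫⁻ y, φ y ∂U ∂Q := by
          refine lintegral_congr_ae (hQ.mono fun e he => ?_)
          exact (hU e.1 e.2 he _ hT).trans ih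
      _ = ∫⁻ y, φ y ∂U := by simp

lemma gibbsOp_iterate_eq_lintegral_meanAlong [IsProbabilityMeasure Q] {φ : (α → ℝ) → ℝ≥0∞}
    (hφ : Measurable φ) (N : ℕ) (x : α → ℝ) : (gibbsOp Q)^[N] φ x
      = ∫⁻ ω, meanAlong (List.ofFn ω) φ x ∂Measure.pi (fun _ : Fin N => Q) := by
  induction N generalizing x with
  | zero => simp [meanAlong]
  | succ N ih =>
    rw [Function.iterate_succ_apply', lintegral_pi_succ Q (measurable_of_countable _)]
    simp only [gibbsOp, ih, List.ofFn_cons, meanAlong]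
    refine lintegral_congr fun e => lintegral_lintegral_swap (Measurable.aemeasurable ?_)
    exact measurable_from_prod_countable_left fun ω =>
      measurable_comp_resample (measurable_meanAlong (List.ofFn ω) hφ) e.1 e.2 x

/-- The two chains are driven by the same updates, so that their difference is a chain itself. -/
lemma gibbsOp_iterate_le_of_synchronous {α : Type*} [Fintype α] [DecidableEq α]
    [MeasurableSpace α] [DiscreteMeasurableSpace α] {Q : Measure (α × α)} [IsProbabilityMeasure Q]
    (hQ : ∀ᵐ e ∂Q, e.1 ≠ e.2) {φ ψ χ : (α → ℝ) → ℝ≥0∞} (hψ : Measurable ψ) (hχ : Measurable χ)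
    {p c : ℝ≥0∞} (h : ∀ x y, ∑ g, x g = ∑ g, y g → φ x ≤ ψ y + (p + c * χ (x - y))) (T : ℕ)
    {x y : α → ℝ} (hxy : ∑ g, x g = ∑ g, y g) :
    (gibbsOp Q)^[T] φ x ≤ (gibbsOp Q)^[T] ψ y + (p + c * (gibbsOp Q)^[T] χ (x - y)) := by
  induction T generalizing x y with
  | zero => exact h x y hxy
  | succ T ih =>
    have hψT := measurable_comp_resample (measurable_gibbsOp_iterate Q hψ T)
    have hχT := measurable_comp_resample (measurable_gibbsOp_iterate Q hχ T)
    simp only [Function.iterate_succ_apply']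
    calc gibbsOp Q ((gibbsOp Q)^[T] φ) x
        ≤ ∫⁻ e, ∫⁻ l, (gibbsOp Q)^[T] ψ (resample e.1 e.2 l y) + (p
            + c * (gibbsOp Q)^[T] χ (resample e.1 e.2 l (x - y))) ∂uniform01 ∂Q := by
          refine lintegral_mono_ae (hQ.mono fun e he => lintegral_mono fun l => ?_)
          rw [← resample_sub he]
          exact ih (by simpa [sum_resample he] using hxy)
      _ = _ := by
          simp only [lintegral_add_left (hψT _ _ _), lintegral_add_left measurable_const,
            lintegral_const_mul _ (hχT _ _ _), lintegral_add_left (measurable_of_countable _),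
            lintegral_const_mul _ (measurable_of_countable _), lintegral_const, measure_univ,
            mul_one, gibbsOp]

end GibbsOperator

section UniformOnFinset

variable {α : Type*} [MeasurableSpace α] {s : Finset α}

lemma isProbabilityMeasure_unifOn (hs : s.Nonempty) : IsProbabilityMeasure (unifOn s) :=
  ⟨by simp [unifOn, ENNReal.inv_mul_cancel, hs.ne_empty]⟩

variable [DiscreteMeasurableSpace α]

lemma ae_unifOn {p : α → Prop} (hp : ∀ a ∈ s, p a) : ∀ᵐ a ∂unifOn s, p a := by
  rw [ae_iff, unifOn]
  simp +contextual [hp]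

lemma lintegral_unifOn_ofReal (hs : s.Nonempty) {f : α → ℝ} (hf : ∀ a ∈ s, 0 ≤ f a) :
    ∫⁻ a, ENNReal.ofReal (f a) ∂unifOn s = ENNReal.ofReal (𝔼 a ∈ s, f a) := by
  have hcard : (0 : ℝ) < s.card := by simpa using hs
  rw [unifOn, lintegral_smul_measure, lintegral_finsetSum_measure, Finset.expect_eq_sum_div_card,
    ENNReal.ofReal_div_of_pos hcard, ENNReal.ofReal_sum_of_nonneg hf, ENNReal.ofReal_natCast,
    ENNReal.div_eq_inv_mul]
  simp

end UniformOnFinset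

section GibbsStep

variable {Γ : Type*} [Group Γ] [DecidableEq Γ]

lemma gibbsStepG_eq_resample (x : Γ → ℝ) (u : Γ × Γ × ℝ) :
    gibbsStepG Γ x u = resample u.1 (u.1 * u.2.1) u.2.2 x := by
  funext h
  simp only [gibbsStepG, resample, redistribute, Function.update_apply]
  split_ifs <;> ring

variable [Countable Γ] [MeasurableSpace Γ] [DiscreteMeasurableSpace Γ]

lemma measurable_gibbsStepG :
    Measurable fun p : (Γ → ℝ) × (Γ × Γ × ℝ) => gibbsStepG Γ p.1 p.2 := by
  simp only [gibbsStepG_eq_resample]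
  have hresample : Measurable fun q : (Γ × Γ) × ((Γ → ℝ) × ℝ) =>
      resample q.1.1 (q.1.1 * q.1.2) q.2.2 q.2.1 :=
    measurable_from_prod_countable_right fun e => measurable_resample e.1 (e.1 * e.2)
  exact hresample.comp (f := fun p : (Γ → ℝ) × (Γ × Γ × ℝ) => ((p.2.1, p.2.2.1), (p.1, p.2.2.2)))
    (by fun_prop)

lemma measurable_foldl_gibbsStepG (x : Γ → ℝ) (T : ℕ) : Measurable
    fun ω : Fin T → Γ × Γ × ℝ => (List.ofFn ω).foldl (gibbsStepG Γ) x :=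
  (measurable_foldl_ofFn measurable_gibbsStepG T).comp measurable_prodMk_left

end GibbsStep

section EdgeLaw

variable {Γ : Type*} [Group Γ] [Fintype Γ] [MeasurableSpace Γ] {R : Finset Γ}

/-- The law of the edge `(g, g * r)` updated by the Gibbs sampler. -/
def edgeLaw (R : Finset Γ) : Measure (Γ × Γ) :=
  ((unifOn (Finset.univ : Finset Γ)).prod (unifOn R)).map fun p => (p.1, p.1 * p.2)

lemma isProbabilityMeasure_driveG (hne : R.Nonempty) : IsProbabilityMeasure (driveG Γ R) := by
  have := isProbabilityMeasure_unifOn (Finset.univ_nonempty (α := Γ))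
  have := isProbabilityMeasure_unifOn hne
  unfold driveG
  infer_instance

variable [DiscreteMeasurableSpace Γ]

lemma isProbabilityMeasure_edgeLaw (hne : R.Nonempty) : IsProbabilityMeasure (edgeLaw R) := by
  have := isProbabilityMeasure_unifOn (Finset.univ_nonempty (α := Γ))
  have := isProbabilityMeasure_unifOn hne
  exact Measure.isProbabilityMeasure_map (measurable_of_countable _).aemeasurable

lemma ae_edgeLaw_ne (hid : (1 : Γ) ∉ R) (hne : R.Nonempty) : ∀ᵐ e ∂edgeLaw R, e.1 ≠ e.2 := by
  have := isProbabilityMeasure_unifOn hne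
  rw [edgeLaw, ae_map_iff (measurable_of_countable _).aemeasurable
    (Set.to_countable _).measurableSet]
  have hR : ∀ᵐ r ∂unifOn R, r ≠ 1 := ae_unifOn fun r hr => ne_of_mem_of_not_mem hr hid
  exact (Measure.quasiMeasurePreserving_snd.ae hR).mono fun p hp => (mul_ne_left.2 hp).symm

lemma lintegral_edgeLaw (hne : R.Nonempty) (f : Γ × Γ → ℝ≥0∞) : ∫⁻ e, f e ∂edgeLaw R
    = ∫⁻ g, ∫⁻ r, f (g, g * r) ∂unifOn R ∂unifOn (Finset.univ : Finset Γ) := by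
  have := isProbabilityMeasure_unifOn hne
  rw [edgeLaw, lintegral_map (measurable_of_countable _) (measurable_of_countable _),
    lintegral_prod _ (measurable_of_countable _).aemeasurable]

lemma lintegral_edgeLaw_ofReal (hne : R.Nonempty) {f : Γ → Γ → ℝ}
    (hf : ∀ g, ∀ r ∈ R, 0 ≤ f g (g * r)) :
    ∫⁻ e, ENNReal.ofReal (f e.1 e.2) ∂edgeLaw R = ENNReal.ofReal (𝔼 g, 𝔼 r ∈ R, f g (g * r)) := by
  rw [lintegral_edgeLaw hne]
  simp only [lintegral_unifOn_ofReal hne (hf _)]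
  exact lintegral_unifOn_ofReal Finset.univ_nonempty fun g _ => Finset.expect_nonneg (hf g)

variable [DecidableEq Γ]

lemma lintegral_driveG_gibbsStepG (hne : R.Nonempty) {φ : (Γ → ℝ) → ℝ≥0∞} (hφ : Measurable φ)
    (x : Γ → ℝ) : ∫⁻ u, φ (gibbsStepG Γ x u) ∂driveG Γ R = gibbsOp (edgeLaw R) φ x := by
  have := isProbabilityMeasure_unifOn hne
  have hstep : Measurable fun u => φ (gibbsStepG Γ x u) :=
    hφ.comp (measurable_gibbsStepG.comp measurable_prodMk_left)
  rw [driveG, lintegral_prod _ hstep.aemeasurable, gibbsOp, lintegral_edgeLaw hne]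
  refine lintegral_congr fun g =>
    (lintegral_prod _ (hstep.comp measurable_prodMk_left).aemeasurable).trans ?_
  simp only [Function.comp_apply, gibbsStepG_eq_resample]

lemma isProbabilityMeasure_lawG (hne : R.Nonempty) (x : Γ → ℝ) (T : ℕ) :
    IsProbabilityMeasure (lawG Γ R x T) := by
  have := isProbabilityMeasure_driveG hne
  exact Measure.isProbabilityMeasure_map (measurable_foldl_gibbsStepG x T).aemeasurable

theorem lintegral_lawG (hne : R.Nonempty) {φ : (Γ → ℝ) → ℝ≥0∞} (hφ : Measurable φ) (x : Γ → ℝ)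
    (T : ℕ) : ∫⁻ y, φ y ∂lawG Γ R x T = (gibbsOp (edgeLaw R))^[T] φ x := by
  have := isProbabilityMeasure_edgeLaw hne
  have := isProbabilityMeasure_driveG hne
  rw [lawG, lintegral_map hφ (measurable_foldl_gibbsStepG x T)]
  induction T generalizing x with
  | zero => simp
  | succ T ih =>
    refine (lintegral_pi_succ _ (hφ.comp (measurable_foldl_gibbsStepG x (T + 1)))).trans ?_
    rw [Function.iterate_succ_apply']
    simp only [Function.comp_apply, List.ofFn_cons, List.foldl_cons, ih]
    exact lintegral_driveG_gibbsStepG hne (measurable_gibbsOp_iterate _ hφ T) x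

end EdgeLaw

section SynchronousContraction

lemma continuous_resample {α : Type*} [DecidableEq α] (a b : α) (x : α → ℝ) :
    Continuous fun l => resample a b l x := by
  unfold resample redistribute
  fun_prop

variable {Γ : Type*} [Group Γ] [Fintype Γ] [DecidableEq Γ] {R : Finset Γ}

lemma integrable_autocorrelationForm_resample (a D : Γ → ℝ) (g h : Γ) :
    Integrable (fun l => autocorrelationForm a (resample g h l D)) uniform01 := by
  have hcont : Continuous fun D => autocorrelationForm a D := by
    unfold autocorrelationForm autocorrelation
    fun_prop
  exact (hcont.comp (continuous_resample g h D)).integrableOn_Icc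

variable [MeasurableSpace Γ] [DiscreteMeasurableSpace Γ]

theorem gibbsOp_iterate_sum_sq (hsym : ∀ r ∈ R, r⁻¹ ∈ R) (hid : (1 : Γ) ∉ R) (hne : R.Nonempty)
    (t : ℕ) {D : Γ → ℝ} (hD : ∑ g, D g = 0) :
    (gibbsOp (edgeLaw R))^[t] (fun w => ENNReal.ofReal (∑ g, w g ^ 2)) D
      = ENNReal.ofReal (autocorrelationForm (differenceKernel R t) D) := by
  induction t generalizing D with
  | zero => exact congrArg _ (autocorrelationForm_centeredDelta hD).symm
  | succ t ih =>
    have hbalanced : ∀ g h l, g ≠ h → ∑ k, resample g h l D k = 0 := fun g h l hgh => by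
      rw [sum_resample hgh (by simp), hD]
    have hnonneg : ∀ g h, g ≠ h →
        ∀ l, 0 ≤ autocorrelationForm (differenceKernel R t) (resample g h l D) := fun g h hgh l =>
      autocorrelationForm_differenceKernel_nonneg hsym hid hne t (hbalanced g h l hgh)
    rw [Function.iterate_succ_apply', differenceKernel_succ,
      ← expect_integral_autocorrelationForm_resample hsym hid hne (differenceKernel_inv hsym t),
      ← lintegral_edgeLaw_ofReal hne
        (f := fun g h => ∫ l, autocorrelationForm (differenceKernel R t) (resample g h l D)
          ∂uniform01)]
    · refine lintegral_congr_ae ((ae_edgeLaw_ne hid hne).mono fun e he => ?_)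
      simp only [ih (hbalanced _ _ _ he)]
      exact (ofReal_integral_eq_lintegral_ofReal (integrable_autocorrelationForm_resample _ _ _ _)
        (.of_forall (hnonneg _ _ he))).symm
    · intro g r hr
      have hgr : g ≠ g * r := fun h => ne_of_mem_of_not_mem hr hid (mul_eq_left.1 h.symm)
      exact integral_nonneg (hnonneg g (g * r) hgr)

lemma gibbsOp_iterate_sum_sq_le (hsym : ∀ r ∈ R, r⁻¹ ∈ R) (hid : (1 : Γ) ∉ R) (hne : R.Nonempty)
    (hcard : 4 ≤ Fintype.card Γ) (hγ : 0 ≤ gapHat Γ R) (t : ℕ) {D : Γ → ℝ}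
    (hD : ∑ g, D g = 0) :
    (gibbsOp (edgeLaw R))^[t] (fun w => ENNReal.ofReal (∑ g, w g ^ 2)) D
      ≤ ENNReal.ofReal
        ((∑ g, D g ^ 2) * √(Fintype.card Γ * ((1 - gapHat Γ R / 3) ^ t * 2))) := by
  rw [gibbsOp_iterate_sum_sq hsym hid hne t hD]
  refine ENNReal.ofReal_le_ofReal ((autocorrelationForm_le _ D).trans ?_)
  gcongr
  exact sum_vertexWeight_mul_differenceKernel_sq_le hsym hid hne hcard hγ t

end SynchronousContraction

section Averaging

lemma sum_resample_half_sq {α : Type*} [Fintype α] [DecidableEq α] {a b : α} (hab : a ≠ b)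
    (v : α → ℝ) :
    ∑ g, resample a b (1 / 2) v g ^ 2 = ∑ g, v g ^ 2 - (v b - v a) ^ 2 / 2 := by
  rw [resample, sum_comp_redistribute hab Finset.univ (· ^ 2)]
  simp only [Finset.mem_univ, if_true]
  ring

lemma sum_centeredPointMass {α : Type*} [Fintype α] [DecidableEq α] (o : α) :
    ∑ g, centeredPointMass o g = 0 := by
  have : Nonempty α := ⟨o⟩
  simp [centeredPointMass, Finset.sum_sub_distrib]

lemma sum_centeredPointMass_sq_le {α : Type*} [Fintype α] [DecidableEq α] (o : α) :
    ∑ g, centeredPointMass o g ^ 2 ≤ 1 := by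
  have hterm : ∀ g, centeredPointMass o g ^ 2 = (Pi.single o 1 : α → ℝ) g
      - 1 / Fintype.card α * ((Pi.single o 1 : α → ℝ) g + centeredPointMass o g) := by
    intro g
    rcases eq_or_ne g o with rfl | hg
    · simp only [centeredPointMass, Pi.single_eq_same]
      ring
    · simp only [centeredPointMass, Pi.single_eq_of_ne hg]
      ring
  simp [hterm, Finset.sum_sub_distrib, ← Finset.mul_sum, Finset.sum_add_distrib,
    sum_centeredPointMass]

variable {Γ : Type*} [Group Γ] [Fintype Γ] [DecidableEq Γ] {R : Finset Γ}

lemma expect_sum_resample_half_sq_le (hid : (1 : Γ) ∉ R) (hne : R.Nonempty) {v : Γ → ℝ}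
    (hv : ∑ g, v g = 0) :
    𝔼 g, 𝔼 r ∈ R, ∑ k, resample g (g * r) (1 / 2) v k ^ 2
      ≤ (1 - gapHat Γ R / 2) * ∑ k, v k ^ 2 := by
  have hedge : ∀ g, 𝔼 r ∈ R, ∑ k, resample g (g * r) (1 / 2) v k ^ 2
      = ∑ k, v k ^ 2 - (𝔼 r ∈ R, (v (g * r) - v g) ^ 2) / 2 := fun g => by
    rw [Finset.expect_div, ← Finset.expect_const hne (∑ k, v k ^ 2), ← Finset.expect_sub_distrib]
    refine Finset.expect_congr rfl fun r hr => ?_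
    have hgr : g ≠ g * r := fun h => ne_of_mem_of_not_mem hr hid (mul_eq_left.1 h.symm)
    rw [sum_resample_half_sq hgr]
  calc 𝔼 g, 𝔼 r ∈ R, ∑ k, resample g (g * r) (1 / 2) v k ^ 2
      = ∑ k, v k ^ 2 - dirichletForm R v / 2 := by
        simp only [hedge, Finset.expect_sub_distrib, Fintype.expect_const, dirichletForm,
          Finset.expect_div]
    _ ≤ (1 - gapHat Γ R / 2) * ∑ k, v k ^ 2 := by linarith [gapHat_mul_sum_sq_le hid hne hv]

variable [MeasurableSpace Γ] [DiscreteMeasurableSpace Γ]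

lemma lintegral_sum_averageAlong_sq_le (hid : (1 : Γ) ∉ R) (hne : R.Nonempty) (N : ℕ) {v : Γ → ℝ}
    (hv : ∑ g, v g = 0) :
    ∫⁻ ω, ENNReal.ofReal (∑ g, averageAlong (List.ofFn ω) v g ^ 2)
        ∂Measure.pi (fun _ : Fin N => edgeLaw R)
      ≤ ENNReal.ofReal ((1 - gapHat Γ R / 2) ^ N * ∑ g, v g ^ 2) := by
  have := isProbabilityMeasure_edgeLaw hne
  have hγ : 0 ≤ 1 - gapHat Γ R / 2 := by linarith [gapHat_le_two hid hne]
  induction N generalizing v with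
  | zero => simp [averageAlong]
  | succ N ih =>
    rw [lintegral_pi_succ _ (measurable_of_countable _)]
    simp only [List.ofFn_cons, averageAlong]
    calc ∫⁻ e, ∫⁻ ω, ENNReal.ofReal
            (∑ g, averageAlong (List.ofFn ω) (resample e.1 e.2 (1 / 2) v) g ^ 2)
            ∂Measure.pi (fun _ : Fin N => edgeLaw R) ∂edgeLaw R
        ≤ ∫⁻ e, ENNReal.ofReal ((1 - gapHat Γ R / 2) ^ N
            * ∑ g, resample e.1 e.2 (1 / 2) v g ^ 2) ∂edgeLaw R :=
          lintegral_mono_ae ((ae_edgeLaw_ne hid hne).mono fun e he =>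
            ih (by rw [sum_resample he (by simp), hv]))
      _ = ENNReal.ofReal ((1 - gapHat Γ R / 2) ^ N
            * 𝔼 g, 𝔼 r ∈ R, ∑ k, resample g (g * r) (1 / 2) v k ^ 2) := by
          simp only [Finset.mul_expect]
          exact lintegral_edgeLaw_ofReal hne (f := fun g h =>
            (1 - gapHat Γ R / 2) ^ N * ∑ k, resample g h (1 / 2) v k ^ 2)
            fun g r _ => by positivity
      _ ≤ ENNReal.ofReal ((1 - gapHat Γ R / 2) ^ (N + 1) * ∑ g, v g ^ 2) := by
          rw [pow_succ, mul_assoc]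
          gcongr
          exact expect_sum_resample_half_sq_le hid hne hv

/-- Markov's inequality for the squared deviation from uniformity of a point mass averaged along the
edges. -/
lemma pi_edgeLaw_not_connects_le (hid : (1 : Γ) ∉ R) (hne : R.Nonempty) (N : ℕ) :
    Measure.pi (fun _ : Fin N => edgeLaw R) {ω | ¬ Connects (List.ofFn ω)}
      ≤ ENNReal.ofReal ((Fintype.card Γ : ℝ) ^ 2 * (1 - gapHat Γ R / 2) ^ N) := by
  have := isProbabilityMeasure_edgeLaw hne
  have hγ : 0 ≤ 1 - gapHat Γ R / 2 := by linarith [gapHat_le_two hid hne]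
  rw [← lintegral_indicator_one (Set.to_countable _).measurableSet]
  calc ∫⁻ ω, {ω : Fin N → Γ × Γ | ¬ Connects (List.ofFn ω)}.indicator 1 ω
        ∂Measure.pi (fun _ => edgeLaw R)
      ≤ ∫⁻ ω, ENNReal.ofReal ((Fintype.card Γ : ℝ) ^ 2) * ENNReal.ofReal
          (∑ g, averageAlong (List.ofFn ω) (centeredPointMass 1) g ^ 2)
          ∂Measure.pi (fun _ => edgeLaw R) := by
        refine lintegral_mono_ae ((ae_pi_forall_mem_ofFn (ae_edgeLaw_ne hid hne) N).mono
          fun ω hω => Set.indicator_apply_le' (fun hconn => ?_) fun _ => zero_le)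
        rw [Pi.one_apply, ← ENNReal.ofReal_mul (by positivity), ENNReal.one_le_ofReal, mul_comm,
          ← div_le_iff₀ (by positivity)]
        exact one_div_sq_le_sum_sq_averageAlong 1 hω hconn
    _ ≤ ENNReal.ofReal ((Fintype.card Γ : ℝ) ^ 2) * ENNReal.ofReal
          ((1 - gapHat Γ R / 2) ^ N * ∑ g, centeredPointMass (1 : Γ) g ^ 2) := by
        rw [lintegral_const_mul _ (measurable_of_countable _)]
        gcongr
        exact lintegral_sum_averageAlong_sq_le hid hne N (sum_centeredPointMass 1)
    _ ≤ ENNReal.ofReal ((Fintype.card Γ : ℝ) ^ 2 * (1 - gapHat Γ R / 2) ^ N) := by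
        rw [← ENNReal.ofReal_mul (by positivity)]
        gcongr
        exact mul_le_of_le_one_right (by positivity) (sum_centeredPointMass_sq_le 1)

end Averaging

section Merging

lemma sum_sq_sub_le_two {α : Type*} [Fintype α] {x y : α → ℝ} (hx : x ∈ simplexG α)
    (hy : y ∈ simplexG α) : ∑ g, (x - y) g ^ 2 ≤ 2 := by
  have hle : ∀ z ∈ simplexG α, ∀ g, z g ≤ 1 := fun z hz g =>
    hz.2 ▸ Finset.single_le_sum (fun h _ => hz.1 h) (Finset.mem_univ g)
  calc ∑ g, (x - y) g ^ 2 ≤ ∑ g, (x g + y g) := by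
        refine Finset.sum_le_sum fun g _ => ?_
        rw [Pi.sub_apply]
        nlinarith [mul_nonneg (hx.1 g) (hy.1 g), hx.1 g, hy.1 g, hle x hx g, hle y hy g]
    _ = 2 := by
        rw [Finset.sum_add_distrib, hx.2, hy.2]
        norm_num

variable {α : Type*} [DecidableEq α] [MeasurableSpace α] [DiscreteMeasurableSpace α]

/-- The risk of the coupling along `N` independent edges of law `Q`. -/
def expectedMergeRisk (Q : Measure (α × α)) (ε : ℝ) (N : ℕ) (y : α → ℝ) : ℝ≥0∞ :=
  ∫⁻ ω, mergeRisk ε (List.ofFn ω) y ∂Measure.pi (fun _ : Fin N => Q)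

lemma measurable_mergeRisk_ofFn [Countable α] (ε : ℝ) (N : ℕ) :
    Measurable fun p : (α → ℝ) × (Fin N → α × α) => mergeRisk ε (List.ofFn p.2) p.1 :=
  measurable_from_prod_countable_left fun ω => measurable_mergeRisk ε (List.ofFn ω)

lemma measurable_expectedMergeRisk [Countable α] (Q : Measure (α × α)) (ε : ℝ)
    (N : ℕ) : Measurable (expectedMergeRisk Q ε N) :=
  (measurable_mergeRisk_ofFn ε N).lintegral_prod_right'

variable [Fintype α] {Q : Measure (α × α)} [IsProbabilityMeasure Q]

/-- The three terms account for the updates that split mass below `3 * ε`, for edges that leave the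
graph disconnected, and for starting points that are more than `ε` apart. -/
lemma gibbsOp_iterate_le_add_expectedMergeRisk (hQ : ∀ᵐ e ∂Q, e.1 ≠ e.2)
    {φ : (α → ℝ) → ℝ≥0∞} (hφ : Measurable φ) (hφ1 : ∀ x, φ x ≤ 1) {ε : ℝ} (hε : 0 < ε) (N : ℕ)
    {x y : α → ℝ} (hxy : ∑ g, x g = ∑ g, y g) :
    (gibbsOp Q)^[N] φ x ≤ ((gibbsOp Q)^[N] φ y + expectedMergeRisk Q ε N y)
      + (Measure.pi (fun _ : Fin N => Q) {ω | ¬ Connects (List.ofFn ω)}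
        + ENNReal.ofReal (Fintype.card α / ε ^ 2) * ENNReal.ofReal (∑ g, (x - y) g ^ 2)) := by
  rw [gibbsOp_iterate_eq_lintegral_meanAlong hφ, gibbsOp_iterate_eq_lintegral_meanAlong hφ,
    expectedMergeRisk]
  rcases le_or_gt (∑ g, |(x - y) g|) ε with hclose | hfar
  · refine le_trans ?_ (add_le_add_right le_self_add _)
    rw [← lintegral_add_left (measurable_of_countable _),
      ← lintegral_indicator_one (Set.to_countable _).measurableSet,
      ← lintegral_add_left (measurable_of_countable _)]
    refine lintegral_mono_ae ((ae_pi_forall_mem_ofFn hQ N).mono fun ω hω => ?_)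
    by_cases hconn : Connects (List.ofFn ω)
    · have hsum : ∑ g, (x - y) g = 0 := by simp [hxy]
      exact (meanAlong_le_add_mergeRisk hε hφ1 hω
        (hconn.componentwiseBalanced hε.le hsum hclose)).trans le_self_add
    · rw [Set.indicator_of_mem (by exact hconn)]
      exact (meanAlong_le_one _ hφ1 x).trans le_add_self
  · have hcauchy : ε ^ 2 ≤ Fintype.card α * ∑ g, (x - y) g ^ 2 :=
      calc ε ^ 2 ≤ (∑ g, |(x - y) g|) ^ 2 := by gcongr
        _ ≤ _ := by simpa using sq_sum_le_card_mul_sum_sq (s := Finset.univ)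
                      (f := fun g => |(x - y) g|)
    calc ∫⁻ ω, meanAlong (List.ofFn ω) φ x ∂Measure.pi (fun _ : Fin N => Q)
        ≤ 1 := (lintegral_mono fun ω => meanAlong_le_one _ hφ1 x).trans_eq (by simp)
      _ ≤ ENNReal.ofReal (Fintype.card α / ε ^ 2) * ENNReal.ofReal (∑ g, (x - y) g ^ 2) := by
        rwa [← ENNReal.ofReal_mul (by positivity), ENNReal.one_le_ofReal, div_mul_eq_mul_div,
          one_le_div (by positivity)]
      _ ≤ _ := le_add_self.trans le_add_self

lemma lintegral_expectedMergeRisk_le [Nonempty α] (hQ : ∀ᵐ e ∂Q, e.1 ≠ e.2) {ε : ℝ}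
    (hε : 0 < ε) (N : ℕ) :
    ∫⁻ y, expectedMergeRisk Q ε N y ∂UG α
      ≤ ENNReal.ofReal (3 * (Fintype.card α : ℝ) ^ 2 * ε) := by
  have := isProbabilityMeasure_UG (α := α)
  simp only [expectedMergeRisk]
  rw [lintegral_lintegral_swap (measurable_mergeRisk_ofFn ε N).aemeasurable]
  calc ∫⁻ ω, ∫⁻ y, mergeRisk ε (List.ofFn ω) y ∂UG α ∂Measure.pi (fun _ : Fin N => Q)
      ≤ ∫⁻ _, Fintype.card α * ENNReal.ofReal (Fintype.card α * (3 * ε))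
          ∂Measure.pi (fun _ : Fin N => Q) := by
        refine lintegral_mono_ae ((ae_pi_forall_mem_ofFn hQ N).mono fun ω hω => ?_)
        exact le_self_add.trans (lintegral_mergeRisk_add_le resampleInvariant_UG
          (fun g => UG_lt_le g (by positivity)) hω)
    _ = ENNReal.ofReal (3 * (Fintype.card α : ℝ) ^ 2 * ε) := by
        rw [lintegral_const, measure_univ, mul_one, ← ENNReal.ofReal_natCast,
          ← ENNReal.ofReal_mul (by positivity)]
        congr 1
        ring

end Merging

section Assembly

variable {Γ : Type*} [Group Γ] [Fintype Γ] [DecidableEq Γ] [MeasurableSpace Γ]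
  [DiscreteMeasurableSpace Γ] {R : Finset Γ}

/-- During the first `M` updates the two chains share all updates and contract; the last `N` updates
merge them. -/
lemma gibbsOp_iterate_le_of_mem_simplexG (hsym : ∀ r ∈ R, r⁻¹ ∈ R) (hid : (1 : Γ) ∉ R)
    (hne : R.Nonempty) (hcard : 4 ≤ Fintype.card Γ) (hγ : 0 ≤ gapHat Γ R)
    {φ : (Γ → ℝ) → ℝ≥0∞} (hφ : Measurable φ) (hφ1 : ∀ x, φ x ≤ 1) {ε : ℝ} (hε : 0 < ε)
    (M N : ℕ) {x y : Γ → ℝ} (hx : x ∈ simplexG Γ) (hy : y ∈ simplexG Γ) :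
    (gibbsOp (edgeLaw R))^[M + N] φ x
      ≤ (gibbsOp (edgeLaw R))^[M]
          ((gibbsOp (edgeLaw R))^[N] φ + expectedMergeRisk (edgeLaw R) ε N) y
        + (Measure.pi (fun _ : Fin N => edgeLaw R) {ω | ¬ Connects (List.ofFn ω)}
          + ENNReal.ofReal (Fintype.card Γ / ε ^ 2)
            * ENNReal.ofReal (2 * √(Fintype.card Γ * ((1 - gapHat Γ R / 3) ^ M * 2)))) := by
  have := isProbabilityMeasure_edgeLaw hne
  have hQ := ae_edgeLaw_ne hid hne
  have hxy : ∑ g, x g = ∑ g, y g := hx.2.trans hy.2.symm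
  have hsub : ∑ g, (x - y) g = 0 := by simp [hxy]
  rw [Function.iterate_add_apply]
  refine (gibbsOp_iterate_le_of_synchronous hQ
    ((measurable_gibbsOp_iterate _ hφ N).add (measurable_expectedMergeRisk _ ε N))
    (χ := fun w => ENNReal.ofReal (∑ g, w g ^ 2)) (by fun_prop) (fun _ _ =>
      gibbsOp_iterate_le_add_expectedMergeRisk hQ hφ hφ1 hε N) M hxy).trans ?_
  gcongr
  refine (gibbsOp_iterate_sum_sq_le hsym hid hne hcard hγ M hsub).trans ?_
  gcongr
  exact sum_sq_sub_le_two hx hy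

theorem gibbsOp_iterate_le_lintegral_UG_add (hsym : ∀ r ∈ R, r⁻¹ ∈ R) (hid : (1 : Γ) ∉ R)
    (hne : R.Nonempty) (hcard : 4 ≤ Fintype.card Γ) (hγ : 0 ≤ gapHat Γ R)
    {φ : (Γ → ℝ) → ℝ≥0∞} (hφ : Measurable φ) (hφ1 : ∀ x, φ x ≤ 1) {ε : ℝ} (hε : 0 < ε)
    (M N : ℕ) {x : Γ → ℝ} (hx : x ∈ simplexG Γ) :
    (gibbsOp (edgeLaw R))^[M + N] φ x ≤ ∫⁻ y, φ y ∂UG Γ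
      + ENNReal.ofReal (3 * (Fintype.card Γ : ℝ) ^ 2 * ε
        + (Fintype.card Γ : ℝ) ^ 2 * (1 - gapHat Γ R / 2) ^ N
        + Fintype.card Γ / ε ^ 2 * (2 * √(Fintype.card Γ * ((1 - gapHat Γ R / 3) ^ M * 2)))) := by
  have := isProbabilityMeasure_edgeLaw hne
  have := isProbabilityMeasure_UG (α := Γ)
  have hQ := ae_edgeLaw_ne hid hne
  have hgap : 0 ≤ 1 - gapHat Γ R / 2 := by linarith [gapHat_le_two hid hne]
  have hN := measurable_gibbsOp_iterate (edgeLaw R) hφ N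
  have hpointwise := fun y hy =>
    gibbsOp_iterate_le_of_mem_simplexG hsym hid hne hcard hγ hφ hφ1 hε M N hx (y := y) hy
  set n : ℝ := (Fintype.card Γ : ℝ)
  set s := √(n * ((1 - gapHat Γ R / 3) ^ M * 2))
  calc (gibbsOp (edgeLaw R))^[M + N] φ x
      = ∫⁻ _, (gibbsOp (edgeLaw R))^[M + N] φ x ∂UG Γ := by simp
    _ ≤ _ := lintegral_mono_ae (ae_UG_mem_simplexG.mono hpointwise)
    _ = ∫⁻ y, φ y ∂UG Γ + ∫⁻ y, expectedMergeRisk (edgeLaw R) ε N y ∂UG Γ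
        + (Measure.pi (fun _ : Fin N => edgeLaw R) {ω | ¬ Connects (List.ofFn ω)}
          + ENNReal.ofReal (n / ε ^ 2) * ENNReal.ofReal (2 * s)) := by
      rw [lintegral_add_right _ measurable_const, lintegral_const, measure_univ, mul_one,
        lintegral_gibbsOp_iterate hQ resampleInvariant_UG
          (hN.add (measurable_expectedMergeRisk _ ε N))]
      simp only [Pi.add_apply]
      rw [lintegral_add_left hN, lintegral_gibbsOp_iterate hQ resampleInvariant_UG hφ]
    _ ≤ ∫⁻ y, φ y ∂UG Γ + ENNReal.ofReal (3 * n ^ 2 * ε)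
        + (ENNReal.ofReal (n ^ 2 * (1 - gapHat Γ R / 2) ^ N)
          + ENNReal.ofReal (n / ε ^ 2) * ENNReal.ofReal (2 * s)) := by
      gcongr
      exacts [lintegral_expectedMergeRisk_le hQ hε N, pi_edgeLaw_not_connects_le hid hne N]
    _ = _ := by
      rw [ENNReal.ofReal_add (by positivity) (by positivity),
        ENNReal.ofReal_add (by positivity) (by positivity),
        ENNReal.ofReal_mul (p := n / ε ^ 2) (by positivity)]
      simp only [add_assoc]

end Assembly

section Rate

lemma one_sub_pow_le_exp {x : ℝ} (hx : x ≤ 1) (k : ℕ) : (1 - x) ^ k ≤ Real.exp (-(x * k)) :=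
  calc (1 - x) ^ k ≤ Real.exp (-x) ^ k :=
        pow_le_pow_left₀ (sub_nonneg.2 hx) (Real.one_sub_le_exp_neg x) k
    _ = Real.exp (-(x * k)) := by
        rw [← Real.exp_nat_mul]
        ring_nf

lemma sqrt_mul_one_sub_pow_le {n γ : ℝ} (hn : 2 ≤ n) (hγ : γ ≤ 3) (M : ℕ) :
    √(n * ((1 - γ / 3) ^ M * 2)) ≤ n * Real.exp (-(γ * M / 18)) ^ 3 := by
  have hpow : (1 - γ / 3) ^ M ≤ Real.exp (-(γ * M / 18)) ^ 6 := by
    refine (one_sub_pow_le_exp (by linarith) M).trans_eq ?_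
    rw [← Real.exp_nat_mul]
    ring_nf
  refine Real.sqrt_le_iff.2 ⟨by positivity, ?_⟩
  calc n * ((1 - γ / 3) ^ M * 2) ≤ n * (Real.exp (-(γ * M / 18)) ^ 6 * n) := by gcongr
    _ = (n * Real.exp (-(γ * M / 18)) ^ 3) ^ 2 := by ring

/-- The choice `ε = exp (-(γ * M / 18))` balances the first and the last term. -/
lemma coupling_error_le {n γ : ℝ} (hn : 2 ≤ n) (hγ : γ ≤ 2) (M N : ℕ) :
    3 * n ^ 2 * Real.exp (-(γ * M / 18)) + n ^ 2 * (1 - γ / 2) ^ N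
      + n / Real.exp (-(γ * M / 18)) ^ 2 * (2 * √(n * ((1 - γ / 3) ^ M * 2)))
      ≤ 5 * n ^ 2 * Real.exp (-(γ * M / 18)) + n ^ 2 * Real.exp (-(γ * N / 2)) := by
  have hN : (1 - γ / 2) ^ N ≤ Real.exp (-(γ * N / 2)) :=
    (one_sub_pow_le_exp (by linarith) N).trans_eq (by ring_nf)
  set ε := Real.exp (-(γ * M / 18))
  have : 0 < ε := Real.exp_pos _
  calc 3 * n ^ 2 * ε + n ^ 2 * (1 - γ / 2) ^ N + n / ε ^ 2 * (2 * √(n * ((1 - γ / 3) ^ M * 2)))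
      ≤ 3 * n ^ 2 * ε + n ^ 2 * Real.exp (-(γ * N / 2)) + n / ε ^ 2 * (2 * (n * ε ^ 3)) := by
        gcongr
        exact sqrt_mul_one_sub_pow_le hn (by linarith) M
    _ = 5 * n ^ 2 * ε + n ^ 2 * Real.exp (-(γ * N / 2)) := by
        field_simp
        ring

lemma coupling_error_le_rpow {n γ C : ℝ} (hn : 2 ≤ n) (hγ0 : 0 < γ) (hγ2 : γ ≤ 2) (hC : 1 ≤ C)
    {T : ℕ} (hT : 8 * C / γ * Real.log n < T) {M N : ℕ} (hM : T ≤ 2 * M) (hN : T ≤ 2 * N + 1) :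
    5 * n ^ 2 * Real.exp (-(γ * M / 18)) + n ^ 2 * Real.exp (-(γ * N / 2))
      ≤ 6 * n ^ (2 - 2 * C / 9) := by
  have hlog : 1 / 2 ≤ Real.log n := by
    linarith [Real.log_two_gt_d9, Real.log_le_log two_pos hn]
  have hlogC : Real.log n ≤ C * Real.log n := le_mul_of_one_le_left (by linarith) hC
  have hγT : 8 * C * Real.log n ≤ γ * T := by
    rw [div_mul_eq_mul_div, div_lt_iff₀ hγ0] at hT
    linarith
  have hγM : γ * T ≤ γ * (2 * M) := by
    gcongr
    exact_mod_cast hM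
  have hγN : γ * T ≤ γ * (2 * N + 1) := by
    gcongr
    exact_mod_cast hN
  calc 5 * n ^ 2 * Real.exp (-(γ * M / 18)) + n ^ 2 * Real.exp (-(γ * N / 2))
      ≤ 5 * n ^ 2 * Real.exp (-(2 * C / 9 * Real.log n))
        + n ^ 2 * Real.exp (-(2 * C / 9 * Real.log n)) := by
        gcongr <;> linarith
    _ = 6 * n ^ (2 - 2 * C / 9) := by
        rw [Real.rpow_sub (by linarith), Real.rpow_def_of_pos (by linarith) (2 * C / 9),
          Real.exp_neg, mul_comm (Real.log n), Real.rpow_two]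
        ring

lemma tvDist_le_of_forall_le {X : Type*} [MeasurableSpace X] {μ ν : Measure X} [IsFiniteMeasure ν]
    {c : ℝ} (hc : 0 ≤ c) (h : ∀ A, MeasurableSet A → μ A ≤ ν A + ENNReal.ofReal c) :
    tvDist μ ν ≤ c := by
  have : Nonempty {A : Set X // MeasurableSet A} := ⟨⟨∅, .empty⟩⟩
  refine ciSup_le fun A => ?_
  have hA := ENNReal.toReal_mono (by finiteness) (h A A.2)
  rw [ENNReal.toReal_add (by finiteness) (by finiteness), ENNReal.toReal_ofReal hc] at hA
  linarith

end Rate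

variable {G} in
theorem gibbs_sampler_cayley_upper_bound_general
    {R : Finset G} (hsym : ∀ r ∈ R, r⁻¹ ∈ R) (hid : (1 : G) ∉ R)
    (hgen : Subgroup.closure (R : Set G) = ⊤) (hcard : 4 ≤ Fintype.card G) {C : ℝ}
    {x : G → ℝ} (hx : x ∈ simplexG G) {T : ℕ}
    (hT : 8 * C / gapHat G R * Real.log (Fintype.card G) < T) :
    tvDist (lawG G R x T) (UG G) ≤ 6 * (Fintype.card G : ℝ) ^ (2 - 2 * C / 9) := by
  have : Nontrivial G := Fintype.one_lt_card_iff_nontrivial.1 (by omega)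
  have hne : R.Nonempty := by
    rw [Finset.nonempty_iff_ne_empty]
    rintro rfl
    simp at hgen
  have hn : (4 : ℝ) ≤ Fintype.card G := by exact_mod_cast hcard
  have hγ := gapHat_pos hid hne hgen
  have := isProbabilityMeasure_UG (α := G)
  have := isProbabilityMeasure_lawG hne x T
  refine tvDist_le_of_forall_le (by positivity) fun A hA => ?_
  rcases le_or_gt C 9 with hC | hC
  · have hone : 1 ≤ (Fintype.card G : ℝ) ^ (2 - 2 * C / 9) :=
      Real.one_le_rpow (by linarith) (by linarith)
    exact prob_le_one.trans (le_add_left (ENNReal.one_le_ofReal.2 (by linarith)))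
  have hindicator := gibbsOp_iterate_le_lintegral_UG_add hsym hid hne hcard hγ.le
    (measurable_one.indicator hA) (Set.indicator_le_self' fun _ _ => zero_le)
    (Real.exp_pos (-(gapHat G R * (T - T / 2 : ℕ) / 18))) (T - T / 2) (T / 2) hx
  rw [Nat.sub_add_cancel (Nat.div_le_self T 2),
    ← lintegral_lawG hne (measurable_one.indicator hA), lintegral_indicator_one hA,
    lintegral_indicator_one hA] at hindicator
  refine hindicator.trans (add_le_add_right (ENNReal.ofReal_le_ofReal ?_) _)
  exact (coupling_error_le (by linarith) (gapHat_le_two hid hne) _ _).trans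
    (coupling_error_le_rpow (by linarith) hγ (gapHat_le_two hid hne) (by linarith) hT
      (by omega) (by omega))

/-- Convergence rate (upper bound) for the Gibbs sampler on the simplex with geometry. -/
theorem gibbs_sampler_cayley_upper_bound
    (R : Finset G) (hsym : ∀ r ∈ R, r⁻¹ ∈ R) (hid : (1 : G) ∉ R) (hne : R.Nonempty)
    (hgen : Subgroup.closure (R : Set G) = ⊤)
    (C : ℝ) (hC : 103 / 4 < C)
    (hn1 : 4096 < Fintype.card G)
    (hn2 : C / 3 + 10 / 3 < (Fintype.card G : ℝ))
    (hn3 : (C / 3 - 13 / 12) * Real.log (Fintype.card G) < (Fintype.card G : ℝ))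
    (x : G → ℝ) (hx : x ∈ simplexG G)
    (T : ℕ) (hT : 8 * C / gapHat G R * Real.log (Fintype.card G) < (T : ℝ)) :
    tvDist (lawG G R x T) (UG G) ≤ 7 * (Fintype.card G : ℝ) ^ (4.5 - C / 6) := by
  refine (gibbs_sampler_cayley_upper_bound_general hsym hid hgen (by omega) hx hT).trans ?_
  exact mul_le_mul (by norm_num) (Real.rpow_le_rpow_of_exponent_le
    (by exact_mod_cast Fintype.card_pos) (by linarith)) (by positivity) (by norm_num)

end
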